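/- For any 𝓑 ⊆ ℕ, the tautification 𝓑' is the largest element of Taut(𝓑) := {𝓒 ⊆ ℕ : 𝓒 taut and X_{η_𝓒} ⊆ X_η} with respect to the partial order 𝓒₁ ≺ 𝓒₂ ⟺ X_{η_{𝓒₁}} ⊆ X_{η_{𝓒₂}}; that is, 𝓑' ∈ Taut(𝓑) and for every taut 𝓒 with X_{η_𝓒} ⊆ X_η one has X_{η_𝓒} ⊆ X_{η'}. -/

import Mathlib

/-!
The proof replaces logarithmic density by a single invariant mean. A limit of the logarithmically
weighted proportions along an ultrafilter is a translation-invariant finitely additive probability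
`m` on all sets of integers; such means agree on periodic sets. By the Davenport-Erdős inequality
(`recSum_trunc_le`), `m (M_T)` is the supremum of `m (M_S)` over finite `S ⊆ T`, so that it does
not depend on the ultrafilter and every `M_T` has a logarithmic density (`exists_isLogMean`). The
inequality comes from weighting the `L`-smooth integers by `1/n`: inclusion-exclusion is exact for
these weights, and their total mass is `O(log L)` by Mertens' bound (`sum_smooth_le`).

A zero-one law (`IsLogMean.eq_one_of_rough`) says that `m (M_T) < 1` exactly when the elements of
`T` without prime factors up to `y` have multiples of measure tending to `0`. This gives the main
tool, `IsLogMean.pattern_pos`: if `C` contains no rescaled Behrend set `g T`, `1 ∉ T`, and `L` is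
divisible enough, then the `x` in a class `m0` modulo `L` with all `x + i`, `i ∈ I`, being `C`-free
have positive measure, unless a divisor `c ∈ C` of `L` divides some `m0 + i`. Taut sets contain no
rescaled Behrend set (`IsLogMean.noBehrend_of_taut`), and neither does `𝓑'`
(`IsLogMean.noBehrend_Bprime`), because a Behrend union of rescaled Behrend sets is Behrend.

* `𝓑'` is taut: apply the tool to `𝓑' \ {b}` and the class `0` modulo `b`.
* `X_{η'} ⊆ X_η`: realize a block of `η'` with positive measure, with its zeros forced by elements
  of `𝓑'`, and discard the null set where a multiple of such an element is `𝓑`-free.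
* Maximality: let `M N` be positions in `η` of the central blocks of `η_C`. The tool applied to `C`
  shows that every `b' ∈ 𝓑'` has a divisor in `C` that divides `M N` for almost all `N`, hence `b'`
  divides no `M N + i` with `i` free of `C`. Then the tool applied to `𝓑'` near a suitable `M N`,
  with zeros forced by elements of `𝓑`, produces the given block of `η_C` in `η'`.
-/

open MeasureTheory Filter Topology
open scoped Classical

noncomputable section
namespace BFree


def cnt (A : Set ℤ) (L : ℕ) : ℝ := ∑ n ∈ Finset.Icc (1:ℤ) (L:ℤ), if n ∈ A then (1:ℝ) else 0

def natDensity (A : Set ℤ) (d : ℝ) : Prop := Tendsto (fun L : ℕ => cnt A L / L) atTop (𝓝 d)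

def upperDensity (A : Set ℤ) : ℝ := atTop.limsup fun L : ℕ => cnt A L / L

def lowerDensity (A : Set ℤ) : ℝ := atTop.liminf fun L : ℕ => cnt A L / L

def logDensity (A : Set ℤ) (d : ℝ) : Prop :=
  Tendsto (fun L : ℕ =>
      (∑ n ∈ Finset.Icc (1:ℤ) (L:ℤ), if n ∈ A then (n:ℝ)⁻¹ else 0) / Real.log L)
    atTop (𝓝 d)

def MB (B : Set ℕ) : Set ℤ := {n : ℤ | ∃ b ∈ B, (b:ℤ) ∣ n}

def FB (B : Set ℕ) : Set ℤ := {n : ℤ | n ∉ MB B}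

def eta (B : Set ℕ) : ℤ → Bool := fun n => if n ∈ FB B then true else false

def shift (x : ℤ → Bool) : ℤ → Bool := fun n => x (n + 1)

def shiftn (k : ℕ) (x : ℤ → Bool) : ℤ → Bool := fun n => x (n + (k:ℤ))

def orbitClosure (x : ℤ → Bool) : Set (ℤ → Bool) :=
  closure {y | ∃ m : ℤ, y = fun n => x (n + m)}

def Xeta (B : Set ℕ) : Set (ℤ → Bool) := orbitClosure (eta B)

def InvM (X : Set (ℤ → Bool)) : Set (Measure (ℤ → Bool)) :=
  {μ | IsProbabilityMeasure μ ∧ μ.map shift = μ ∧ μ X = 1}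

def primPart (S : Set ℕ) : Set ℕ := {b ∈ S | ∀ b' ∈ S, b' ∣ b → b' = b}

def Dset (B : Set ℕ) : Set ℕ :=
  {d | ∃ A : Set ℕ, A.Infinite ∧ (∀ a ∈ A, 0 < a) ∧ A.Pairwise Nat.Coprime ∧ ∀ a ∈ A, d * a ∈ B}

def Bstar (B : Set ℕ) : Set ℕ := primPart (B ∪ Dset B)

def etaStar (B : Set ℕ) : ℤ → Bool := eta (Bstar B)

def Behrend (A : Set ℕ) : Prop := (∀ a ∈ A, 0 < a) ∧ logDensity (MB A) 1

def Cset (B : Set ℕ) : Set ℕ := {c | ∃ A : Set ℕ, Behrend A ∧ ∀ a ∈ A, c * a ∈ B}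

def Bprime (B : Set ℕ) : Set ℕ := primPart (B ∪ Cset B)

def etaPrime (B : Set ℕ) : ℤ → Bool := eta (Bprime B)

def Taut (B : Set ℕ) : Prop :=
  ∀ b ∈ B, ∃ d1 d2 : ℝ, logDensity (MB (B \ {b})) d1 ∧ logDensity (MB B) d2 ∧ d1 < d2

def Per (x : ℤ → Bool) (s : ℕ) : Set ℤ := {i | ∀ k : ℤ, x (i + (s:ℤ) * k) = x i}

def IsToeplitz (x : ℤ → Bool) : Prop := ∀ i : ℤ, ∃ s : ℕ, 0 < s ∧ i ∈ Per x s

def RegularToeplitz (x : ℤ → Bool) : Prop :=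
  IsToeplitz x ∧ ∃ δ : ℕ → ℝ,
    (∀ r : ℕ, natDensity (⋃ s ∈ Finset.Icc 1 r, Per x s) (δ r)) ∧ Tendsto δ atTop (𝓝 1)

def QuasiGeneric (ℓ : ℕ → ℕ) (x : ℤ → Bool) (ν : Measure (ℤ → Bool)) : Prop :=
  ∀ f : C((ℤ → Bool), ℝ),
    Tendsto (fun i => (∑ n ∈ Finset.Icc 1 (ℓ i), f (shiftn n x)) / (ℓ i : ℝ)) atTop
      (𝓝 (∫ y, f y ∂ν))

def RealizesLowerDensity (A : Set ℤ) (ℓ : ℕ → ℕ) : Prop :=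
  Tendsto ℓ atTop atTop ∧ Tendsto (fun i => cnt A (ℓ i) / (ℓ i : ℝ)) atTop (𝓝 (lowerDensity A))

def IsMirsky (B : Set ℕ) (ν : Measure (ℤ → Bool)) : Prop :=
  IsProbabilityMeasure ν ∧ ∀ ℓ : ℕ → ℕ, RealizesLowerDensity (MB B) ℓ → QuasiGeneric ℓ (eta B) ν

def blocks (X : Set (ℤ → Bool)) (n : ℕ) : Set (Fin n → Bool) :=
  {w | ∃ x ∈ X, ∃ m : ℤ, ∀ i : Fin n, x (m + (i:ℤ)) = w i}

def pCount (X : Set (ℤ → Bool)) (n : ℕ) : ℕ := (blocks X n).ncard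

def topEnt (X : Set (ℤ → Bool)) : ℝ :=
  atTop.limsup fun n : ℕ => Real.logb 2 (pCount X n) / n

def cylinder {n : ℕ} (w : Fin n → Bool) : Set (ℤ → Bool) := {x | ∀ i : Fin n, x ((i:ℕ):ℤ) = w i}

def blockEntropy (μ : Measure (ℤ → Bool)) (n : ℕ) : ℝ :=
  -∑ w : Fin n → Bool, ((μ (cylinder w)).toReal * Real.logb 2 (μ (cylinder w)).toReal)

def measEnt (μ : Measure (ℤ → Bool)) : ℝ := atTop.liminf fun n : ℕ => blockEntropy μ n / n

/-! ### Mertens' bound for sums over smooth numbers -/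

/-- One half of Mertens' first theorem. -/
lemma sum_log_div_prime_le (n : ℕ) (hn : 1 ≤ n) :
    ∑ p ∈ (n + 1).primesBelow, Real.log p / p ≤ Real.log n + Real.log 4 := by
  have hn0 : (0:ℝ) < n := by exact_mod_cast hn
  have h1 : ∀ k ∈ Finset.Icc 1 n,
      ∑ p ∈ (n + 1).primesBelow with p ∣ k, Real.log p ≤ Real.log n := by
    intro k hk
    obtain ⟨hk1, hk2⟩ := Finset.mem_Icc.1 hk
    have hsub : ((n + 1).primesBelow.filter (· ∣ k)) ⊆ k.primeFactors := by
      intro p hp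
      simp only [Finset.mem_filter, Nat.mem_primesBelow] at hp
      simp only [Nat.mem_primeFactors]
      exact ⟨hp.1.2, hp.2, by omega⟩
    calc ∑ p ∈ (n + 1).primesBelow with p ∣ k, Real.log p
        ≤ ∑ p ∈ k.primeFactors, Real.log p := by
          apply Finset.sum_le_sum_of_subset_of_nonneg hsub
          intro p _ _
          exact Real.log_natCast_nonneg p
      _ = Real.log ((∏ p ∈ k.primeFactors, p : ℕ) : ℝ) := by
          rw [Nat.cast_prod, Real.log_prod]
          intro p hp
          exact_mod_cast (Nat.prime_of_mem_primeFactors hp).ne_zero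
      _ ≤ Real.log n := by
          apply Real.log_le_log
          · exact_mod_cast Finset.prod_pos fun p hp => (Nat.prime_of_mem_primeFactors hp).pos
          · exact_mod_cast (Nat.le_of_dvd (by omega) (Nat.prod_primeFactors_dvd k)).trans hk2
  have h2 := Finset.sum_le_sum h1
  have h3 : ∑ k ∈ Finset.Icc 1 n, ∑ p ∈ (n + 1).primesBelow with p ∣ k, Real.log p
      = ∑ p ∈ (n + 1).primesBelow, ((n / p : ℕ) : ℝ) * Real.log p := by
    simp_rw [Finset.sum_filter]
    rw [Finset.sum_comm]
    refine Finset.sum_congr rfl fun p hp => ?_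
    rw [← Finset.sum_filter, Finset.sum_const, nsmul_eq_mul]
    congr 2
    have := Nat.Ioc_filter_dvd_card_eq_div n p
    rw [← this]; rfl
  rw [h3] at h2
  simp only [Finset.sum_const, Nat.card_Icc, add_tsub_cancel_right, nsmul_eq_mul] at h2
  have h4 : ∑ p ∈ (n + 1).primesBelow, Real.log p ≤ Real.log 4 * n := by
    have := Chebyshev.theta_le_log4_mul_x (x := n) (by positivity)
    rw [Chebyshev.theta_eq_sum_primesLE_log] at this
    exact this
  have h5 : ∑ p ∈ (n + 1).primesBelow, (n : ℝ) * (Real.log p / p)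
      ≤ ∑ p ∈ (n + 1).primesBelow, (((n / p : ℕ) : ℝ) * Real.log p + Real.log p) := by
    refine Finset.sum_le_sum fun p hp => ?_
    have hl : 0 ≤ Real.log p := Real.log_natCast_nonneg p
    have hp0 : 0 < p := (Nat.prime_of_mem_primesBelow hp).pos
    have : (n : ℝ) / p ≤ ((n / p : ℕ) : ℝ) + 1 := by
      rw [div_le_iff₀ (by exact_mod_cast hp0)]
      exact_mod_cast (by
        have := Nat.lt_div_mul_add (a := n) hp0
        nlinarith : n ≤ (n / p + 1) * p)
    calc (n : ℝ) * (Real.log p / p) = (n : ℝ) / p * Real.log p := by ring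
      _ ≤ (((n / p : ℕ) : ℝ) + 1) * Real.log p := by gcongr
      _ = _ := by ring
  rw [← Finset.mul_sum, Finset.sum_add_distrib] at h5
  have h6 : (n : ℝ) * ∑ p ∈ (n + 1).primesBelow, Real.log p / p
      ≤ n * (Real.log n + Real.log 4) := by linarith
  exact le_of_mul_le_mul_left h6 hn0

/-- The Euler factors at `1` and at `1 + δ` differ by a factor `exp (2 δ log p / p)`. -/
lemma euler_factor_le (p : ℕ) (hp : 2 ≤ p) (δ : ℝ) (hδ : 0 < δ) :
    (1 - (p:ℝ)⁻¹)⁻¹ ≤ (1 - (p:ℝ) ^ (-(1 + δ)))⁻¹ * Real.exp (2 * δ * (Real.log p / p)) := by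
  have hp0 : (0:ℝ) < p := by positivity
  have hp2 : (2:ℝ) ≤ p := by exact_mod_cast hp
  have hinv : (p:ℝ)⁻¹ ≤ 1 / 2 := by
    rw [inv_le_comm₀ hp0 (by norm_num)]; simpa using hp2
  have hinv0 : 0 < (p:ℝ)⁻¹ := by positivity
  have hlog : 0 ≤ Real.log p := Real.log_natCast_nonneg p
  set q := (p:ℝ) ^ (-(1 + δ)) with hq
  have hqe : q = (p:ℝ)⁻¹ * Real.exp (-(δ * Real.log p)) := by
    rw [hq, neg_add, Real.rpow_add hp0, Real.rpow_neg_one, Real.rpow_def_of_pos hp0]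
    ring_nf
  have hE : 1 - δ * Real.log p ≤ Real.exp (-(δ * Real.log p)) := by
    have := Real.add_one_le_exp (-(δ * Real.log p)); linarith
  have hE1 : Real.exp (-(δ * Real.log p)) ≤ 1 := by
    rw [Real.exp_le_one_iff]; have := mul_nonneg hδ.le hlog; linarith
  have hqle : q ≤ (p:ℝ)⁻¹ := by rw [hqe]; nlinarith
  have hqge : (p:ℝ)⁻¹ - δ * (Real.log p / p) ≤ q := by
    rw [hqe]
    have := mul_le_mul_of_nonneg_left hE hinv0.le
    rw [div_eq_mul_inv]; nlinarith
  have hX : 0 ≤ δ * (Real.log p / p) := by positivity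
  have hexp : 1 + 2 * δ * (Real.log p / p) ≤ Real.exp (2 * δ * (Real.log p / p)) := by
    have := Real.add_one_le_exp (2 * δ * (Real.log p / p)); linarith
  have h1 : 0 < 1 - (p:ℝ)⁻¹ := by linarith
  have h2 : 0 < 1 - q := by linarith
  rw [inv_le_iff_one_le_mul₀ h1, mul_assoc, inv_mul_eq_div, le_div_iff₀ h2]
  calc 1 * (1 - q) ≤ (1 + 2 * δ * (Real.log p / p)) * (1 - (p:ℝ)⁻¹) := by nlinarith
    _ ≤ _ := by gcongr

lemma tsum_rpow_le (s : ℝ) (hs : 1 < s) :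
    ∑' n : ℕ, (n:ℝ) ^ (-s) ≤ 1 + 1 / (s - 1) := by
  have h := ZetaAsymptotics.zeta_limit_aux1 hs
  have hnn : 0 ≤ ZetaAsymptotics.termTSum s :=
    tsum_nonneg fun n => ZetaAsymptotics.term_nonneg _ _
  have hsum : Summable fun n : ℕ => (n:ℝ) ^ (-s) :=
    Real.summable_nat_rpow.2 (by linarith)
  rw [hsum.tsum_eq_zero_add]
  have h0 : ((0:ℕ):ℝ) ^ (-s) = 0 := by
    rw [Nat.cast_zero, Real.zero_rpow (by linarith)]
  have he : (fun n : ℕ => ((n + 1 : ℕ):ℝ) ^ (-s)) = fun n : ℕ => 1 / ((n:ℝ) + 1) ^ s := by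
    funext n
    rw [Real.rpow_neg (by positivity), one_div]; push_cast; rfl
  rw [h0, he]
  have := mul_nonneg (by linarith : 0 ≤ s) hnn
  linarith

/-- The homomorphism `n ↦ n⁻¹`. -/
def invHom : ℕ →* ℝ where
  toFun n := (n:ℝ)⁻¹
  map_one' := by simp
  map_mul' a b := by push_cast; rw [mul_inv]

/-- The homomorphism `n ↦ n ^ (-s)`. -/
def rpowHom (s : ℝ) : ℕ →* ℝ where
  toFun n := (n:ℝ) ^ (-s)
  map_one' := by simp
  map_mul' a b := by push_cast; rw [Real.mul_rpow (by positivity) (by positivity)]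

lemma summable_smooth (N : ℕ) : Summable (fun m : N.smoothNumbers => ((m:ℕ):ℝ)⁻¹) ∧
    HasSum (fun m : N.smoothNumbers => ((m:ℕ):ℝ)⁻¹) (∏ p ∈ N.primesBelow, (1 - (p:ℝ)⁻¹)⁻¹) := by
  have := EulerProduct.summable_and_hasSum_smoothNumbers_prod_primesBelow_geometric (f := invHom)
    (fun {p} hp => by
      have : (1:ℝ) < p := by exact_mod_cast hp.one_lt
      simpa [invHom] using inv_lt_one_of_one_lt₀ this) N
  exact ⟨this.2.summable, this.2⟩

/-- Mertens' upper bound for `∏ (1 - 1/p)⁻¹`, in the form of a sum over smooth numbers. -/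
lemma sum_smooth_le (L : ℕ) (hL : 2 ≤ L) :
    ∑' m : (L + 1).smoothNumbers, ((m:ℕ):ℝ)⁻¹
      ≤ Real.exp 6 * (1 + Real.log L) := by
  have hlogL : Real.log 2 ≤ Real.log L := Real.log_le_log (by norm_num) (by exact_mod_cast hL)
  have hl2 : 0 < Real.log 2 := Real.log_pos (by norm_num)
  have hlog : 0 < Real.log L := by linarith
  set δ := 1 / Real.log L with hδ
  have hδ0 : 0 < δ := by positivity
  rw [(summable_smooth (L + 1)).2.tsum_eq]
  have hsum : Summable (rpowHom (1 + δ)) :=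
    Real.summable_nat_rpow.2 (by linarith)
  have hprod := EulerProduct.prod_primesBelow_geometric_eq_tsum_smoothNumbers hsum (L + 1)
  have hz : ∏ p ∈ (L + 1).primesBelow, (1 - (p:ℝ) ^ (-(1 + δ)))⁻¹ ≤ 1 + Real.log L := by
    calc _ = ∑' m : (L + 1).smoothNumbers, rpowHom (1 + δ) m := hprod
      _ ≤ ∑' n : ℕ, rpowHom (1 + δ) n :=
          hsum.tsum_subtype_le _ _ fun n => Real.rpow_nonneg (by positivity) _
      _ ≤ 1 + 1 / ((1 + δ) - 1) := tsum_rpow_le _ (by linarith)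
      _ = _ := by rw [hδ]; simp
  have hm := sum_log_div_prime_le L (by omega)
  calc ∏ p ∈ (L + 1).primesBelow, (1 - (p:ℝ)⁻¹)⁻¹
      ≤ ∏ p ∈ (L + 1).primesBelow,
          ((1 - (p:ℝ) ^ (-(1 + δ)))⁻¹ * Real.exp (2 * δ * (Real.log p / p))) := by
        apply Finset.prod_le_prod
        · intro p hp
          have : (1:ℝ) < p := by exact_mod_cast (Nat.prime_of_mem_primesBelow hp).one_lt
          have := inv_lt_one_of_one_lt₀ this
          exact inv_nonneg.2 (by linarith)
        · intro p hp
          exact euler_factor_le p (Nat.prime_of_mem_primesBelow hp).two_le δ hδ0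
    _ = (∏ p ∈ (L + 1).primesBelow, (1 - (p:ℝ) ^ (-(1 + δ)))⁻¹) *
          Real.exp (2 * δ * ∑ p ∈ (L + 1).primesBelow, (Real.log p / p)) := by
        rw [Finset.prod_mul_distrib, ← Real.exp_sum, Finset.mul_sum]
    _ ≤ (1 + Real.log L) * Real.exp 6 := by
        gcongr
        have h4 : Real.log 4 = 2 * Real.log 2 := by
          rw [show (4:ℝ) = 2 ^ 2 by norm_num, Real.log_pow]; norm_num
        calc 2 * δ * ∑ p ∈ (L + 1).primesBelow, (Real.log p / p)
            ≤ 2 * δ * (3 * Real.log L) := by gcongr; linarith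
          _ = 6 := by rw [hδ]; field_simp; norm_num
    _ = _ := by ring

/-! ### Invariant means -/

/-- A translation-invariant finitely additive probability defined on all sets of integers. -/
structure IsMean (m : Set ℤ → ℝ) : Prop where
  nonneg : ∀ A, 0 ≤ m A
  univ : m Set.univ = 1
  union : ∀ A B, Disjoint A B → m (A ∪ B) = m A + m B
  shift : ∀ A, m {n | n + 1 ∈ A} = m A

/-- The residue class of `r` modulo `q`. -/
def cls (r : ℤ) (q : ℕ) : Set ℤ := {n | (q:ℤ) ∣ n - r}

lemma mem_cls {n r : ℤ} {q : ℕ} : n ∈ cls r q ↔ (q:ℤ) ∣ n - r := Iff.rfl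

/-- Finitely additive set functions satisfy inclusion-exclusion for two sets. -/
lemma add_union_inter {f : Set ℤ → ℝ} (hf : ∀ A B, Disjoint A B → f (A ∪ B) = f A + f B)
    (A B : Set ℤ) : f (A ∪ B) + f (A ∩ B) = f A + f B := by
  have h1 := hf A (B \ A) Set.disjoint_sdiff_right
  have h2 := hf (A ∩ B) (B \ A)
    (Set.disjoint_sdiff_right.mono_left Set.inter_subset_left)
  rw [Set.union_sdiff_self] at h1
  rw [show A ∩ B ∪ B \ A = B by rw [Set.inter_comm]; exact Set.inter_union_sdiff B A] at h2
  linarith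

namespace IsMean
variable {m : Set ℤ → ℝ}

lemma empty (h : IsMean m) : m ∅ = 0 := by
  have := h.union ∅ ∅ (by simp)
  simp at this; exact this

lemma diff (h : IsMean m) {A B : Set ℤ} (hAB : A ⊆ B) : m (B \ A) = m B - m A := by
  have := h.union A (B \ A) Set.disjoint_sdiff_right
  rw [Set.union_sdiff_cancel hAB] at this
  linarith

lemma mono (h : IsMean m) {A B : Set ℤ} (hAB : A ⊆ B) : m A ≤ m B := by
  have := h.diff hAB
  have := h.nonneg (B \ A)
  linarith

lemma le_one (h : IsMean m) (A : Set ℤ) : m A ≤ 1 := by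
  rw [← h.univ]; exact h.mono (Set.subset_univ _)

lemma union_le (h : IsMean m) (A B : Set ℤ) : m (A ∪ B) ≤ m A + m B := by
  have := add_union_inter h.union A B
  have := h.nonneg (A ∩ B)
  linarith

lemma biUnion_le (h : IsMean m) {ι : Type*} (s : Finset ι) (A : ι → Set ℤ) :
    m (⋃ i ∈ s, A i) ≤ ∑ i ∈ s, m (A i) := by
  induction s using Finset.induction_on with
  | empty => simp [h.empty]
  | insert a s ha ih =>
    rw [Finset.set_biUnion_insert, Finset.sum_insert ha]
    exact (h.union_le _ _).trans (by linarith)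

lemma biUnion (h : IsMean m) {ι : Type*} (s : Finset ι) (A : ι → Set ℤ)
    (hd : ∀ i ∈ s, ∀ j ∈ s, i ≠ j → Disjoint (A i) (A j)) :
    m (⋃ i ∈ s, A i) = ∑ i ∈ s, m (A i) := by
  induction s using Finset.induction_on with
  | empty => simp [h.empty]
  | insert a s ha ih =>
    rw [Finset.set_biUnion_insert, Finset.sum_insert ha, h.union, ih]
    · exact fun i hi j hj => hd i (Finset.mem_insert_of_mem hi) j (Finset.mem_insert_of_mem hj)
    · rw [Set.disjoint_iUnion₂_right]
      intro j hj
      exact hd a (Finset.mem_insert_self _ _) j (Finset.mem_insert_of_mem hj)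
        (by rintro rfl; exact ha hj)

lemma shift_nat (h : IsMean m) (A : Set ℤ) (k : ℕ) : m {n | n + (k:ℤ) ∈ A} = m A := by
  induction k with
  | zero => simp
  | succ k ih =>
    rw [← ih, ← h.shift {n | n + (k:ℤ) ∈ A}]
    congr 1; ext n; simp only [Set.mem_ofPred_eq]; push_cast; rw [add_assoc, add_comm (1:ℤ)]

lemma shift_int (h : IsMean m) (A : Set ℤ) (k : ℤ) : m {n | n + k ∈ A} = m A := by
  obtain ⟨j, rfl | rfl⟩ := k.eq_nat_or_neg
  · exact h.shift_nat A j
  · rw [← h.shift_nat {n | n + -(j:ℤ) ∈ A} j]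
    congr 1; ext n; simp

lemma sum_cls (h : IsMean m) (A : Set ℤ) {q : ℕ} (hq : 0 < q) :
    m A = ∑ r ∈ Finset.range q, m (A ∩ cls r q) := by
  rw [← h.biUnion]
  · congr 1
    ext n
    simp only [Set.mem_iUnion, Finset.mem_range, Set.mem_inter_iff, exists_prop, mem_cls]
    constructor
    · intro hn
      have h0 : 0 ≤ n % (q:ℤ) := Int.emod_nonneg _ (by omega)
      have h1 : n % (q:ℤ) < q := Int.emod_lt_of_pos _ (by omega)
      refine ⟨(n % (q:ℤ)).toNat, by omega, hn, ?_⟩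
      rw [Int.toNat_of_nonneg h0]
      exact Int.dvd_self_sub_emod
    · rintro ⟨r, _, hn, _⟩; exact hn
  · intro i hi j hj hij
    rw [Set.disjoint_left]
    rintro n ⟨_, h1⟩ ⟨_, h2⟩
    rw [mem_cls] at h1 h2
    apply hij
    have h3 : (q:ℤ) ∣ (i:ℤ) - j := by
      have := dvd_sub h2 h1; rwa [show n - (j:ℤ) - (n - i) = i - j by ring] at this
    have hi := Finset.mem_range.1 hi
    have hj := Finset.mem_range.1 hj
    have := Int.eq_zero_of_abs_lt_dvd h3 (by rw [abs_lt]; constructor <;> omega)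
    omega

/-- A `Q`-periodic set is independent of every residue class to a modulus prime to `Q`:
translating by `Q` permutes these classes transitively. -/
lemma inter_cls (h : IsMean m) {A : Set ℤ} {Q v : ℕ} (hA : ∀ n, n + (Q:ℤ) ∈ A ↔ n ∈ A)
    (hv : 0 < v) (hc : Nat.Coprime Q v) (u : ℤ) : m (A ∩ cls u v) = m A / v := by
  set f : ℤ → ℝ := fun r => m (A ∩ cls r v) with hf
  have hQ : ∀ r, f (r + Q) = f r := by
    intro r
    simp only [hf]
    rw [← h.shift_int (A ∩ cls (r + Q) v) Q]
    congr 1; ext n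
    simp only [Set.mem_ofPred_eq, Set.mem_inter_iff, mem_cls, hA]
    rw [add_sub_add_right_eq_sub]
  have hV : ∀ r, f (r + v) = f r := by
    intro r
    simp only [hf]
    congr 1; ext n
    simp only [Set.mem_inter_iff, mem_cls]
    rw [← sub_sub, dvd_sub_self_right]
  have hQ' : ∀ (k : ℤ) r, f (r + k * Q) = f r := by
    intro k
    induction k using Int.induction_on with
    | zero => intro r; simp
    | succ k ih => intro r; rw [← ih r, ← hQ (r + k * Q)]; congr 1; ring
    | pred k ih => intro r; rw [← ih r, ← hQ (r + (-(k:ℤ) - 1) * Q)]; congr 1; ring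
  have hV' : ∀ (k : ℤ) r, f (r + k * v) = f r := by
    intro k
    induction k using Int.induction_on with
    | zero => intro r; simp
    | succ k ih => intro r; rw [← ih r, ← hV (r + k * v)]; congr 1; ring
    | pred k ih => intro r; rw [← ih r, ← hV (r + (-(k:ℤ) - 1) * v)]; congr 1; ring
  obtain ⟨a, b, hab⟩ := (Nat.isCoprime_iff_coprime.2 hc)
  have hconst : ∀ r, f r = f u := by
    intro r
    rw [← hQ' ((r - u) * a) u, ← hV' ((r - u) * b) (u + (r - u) * a * Q)]
    congr 1
    linear_combination (-(r - u)) * hab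
  have hs : m A = v * f u := by
    have e : ∑ r ∈ Finset.range v, m (A ∩ cls (r:ℤ) v) = ∑ _r ∈ Finset.range v, f u :=
      Finset.sum_congr rfl (fun r _ => hconst r)
    rw [h.sum_cls A hv, e, Finset.sum_const, Finset.card_range, nsmul_eq_mul]
  have : (v:ℝ) ≠ 0 := by positivity
  rw [hs]
  field_simp
  rfl

lemma cls_eq (h : IsMean m) {v : ℕ} (hv : 0 < v) (u : ℤ) : m (cls u v) = 1 / v := by
  have := h.inter_cls (A := Set.univ) (Q := 1) (by simp) hv (by simp) u
  rwa [Set.univ_inter, h.univ] at this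

lemma _root_.BFree.periodic_cls {A : Set ℤ} {Q : ℕ} (hA : ∀ n, n + (Q:ℤ) ∈ A ↔ n ∈ A) {r n : ℤ}
    (hn : n ∈ cls r Q) : n ∈ A ↔ r ∈ A := by
  have hA' : ∀ k n, n + k * (Q:ℤ) ∈ A ↔ n ∈ A := by
    intro k
    induction k using Int.induction_on with
    | zero => intro r; simp
    | succ k ih => intro r; rw [← ih r, ← hA (r + k * Q)]; congr! 1; ring
    | pred k ih => intro r; rw [← ih r, ← hA (r + (-(k:ℤ) - 1) * Q)]; congr! 1; ring
  obtain ⟨k, hk⟩ := hn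
  rw [← hA' k r, show r + k * Q = n by linarith]

/-- All means agree on periodic sets. -/
lemma eq_of_periodic (h : IsMean m) {m' : Set ℤ → ℝ} (h' : IsMean m') {A : Set ℤ} {Q : ℕ}
    (hQ : 0 < Q) (hA : ∀ n, n + (Q:ℤ) ∈ A ↔ n ∈ A) : m A = m' A := by
  rw [h.sum_cls A hQ, h'.sum_cls A hQ]
  refine Finset.sum_congr rfl fun r _ => ?_
  have hmem : ∀ n ∈ cls r Q, (n ∈ A ↔ (r:ℤ) ∈ A) := fun n hn => periodic_cls hA hn
  by_cases hr : (r:ℤ) ∈ A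
  · rw [Set.inter_eq_right.2 (fun n hn => (hmem n hn).2 hr), h.cls_eq hQ, h'.cls_eq hQ]
  · have : A ∩ cls r Q = ∅ := by
      ext n; simp only [Set.mem_inter_iff, Set.mem_empty_iff_false, iff_false, not_and]
      exact fun h1 h2 => hr ((hmem n h2).1 h1)
    rw [this, h.empty, h'.empty]

/-- The mean conditioned on the multiples of `b`, rescaled. -/
lemma scale (h : IsMean m) {b : ℕ} (hb : 0 < b) :
    IsMean (fun X => b * m {n | (b:ℤ) ∣ n ∧ n / b ∈ X}) where
  nonneg A := mul_nonneg (by positivity) (h.nonneg _)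
  univ := by
    have := h.cls_eq hb 0
    simp only [cls, sub_zero] at this
    simp only [Set.mem_univ, and_true]
    rw [this]
    have : (b:ℝ) ≠ 0 := by positivity
    field_simp
  union A B hAB := by
    rw [← mul_add, ← h.union]
    · congr 2; ext n; simp only [Set.mem_ofPred_eq, Set.mem_union]; tauto
    · rw [Set.disjoint_left] at hAB ⊢
      rintro n ⟨_, h1⟩ ⟨_, h2⟩
      exact hAB h1 h2
  shift A := by
    rw [← h.shift_int {n | (b:ℤ) ∣ n ∧ n / b ∈ A} b]
    congr 2; ext n
    simp only [Set.mem_ofPred_eq, dvd_add_self_right]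
    rw [Int.add_ediv_of_dvd_right (dvd_refl _), Int.ediv_self (by omega)]

end IsMean

lemma MB_mono {S T : Set ℕ} (h : S ⊆ T) : MB S ⊆ MB T := by
  rintro n ⟨b, hb, hn⟩; exact ⟨b, h hb, hn⟩

lemma MB_periodic {S : Set ℕ} {Q : ℕ} (hS : ∀ s ∈ S, s ∣ Q) (n : ℤ) :
    n + (Q:ℤ) ∈ MB S ↔ n ∈ MB S := by
  constructor <;> rintro ⟨b, hb, hn⟩ <;> refine ⟨b, hb, ?_⟩
  · exact (dvd_add_left (by exact_mod_cast hS b hb)).1 hn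
  · exact (dvd_add_left (by exact_mod_cast hS b hb)).2 hn

lemma IsMean.eq_MB {m m' : Set ℤ → ℝ} (h : IsMean m) (h' : IsMean m') (S : Finset ℕ)
    (h0 : 0 ∉ S) : m (MB S) = m' (MB S) :=
  h.eq_of_periodic h' (Q := ∏ s ∈ S, s)
    (Finset.prod_pos fun s hs => Nat.pos_of_ne_zero (by rintro rfl; exact h0 hs))
    (MB_periodic fun s hs => Finset.dvd_prod_of_mem _ hs)

/-- By inclusion-exclusion, two finitely additive set functions that agree on the sets `dℤ`, for
`d` in a family `P` closed under least common multiples, agree on the sets `M_S`, `S ⊆ P` finite. -/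
lemma agree_MB {f g : Set ℤ → ℝ} (hf : ∀ A B, Disjoint A B → f (A ∪ B) = f A + f B)
    (hg : ∀ A B, Disjoint A B → g (A ∪ B) = g A + g B) {P : ℕ → Prop}
    (hP : ∀ a b, P a → P b → P (Nat.lcm a b)) (h1 : P 1)
    (hd : ∀ d, P d → f {n | (d:ℤ) ∣ n} = g {n | (d:ℤ) ∣ n})
    (S : Finset ℕ) (hS : ∀ s ∈ S, P s) : f (MB S) = g (MB S) := by
  have key : ∀ d, P d → f ({n | (d:ℤ) ∣ n} ∩ MB S) = g ({n | (d:ℤ) ∣ n} ∩ MB S) := by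
    induction S using Finset.induction_on with
    | empty =>
      intro d _
      have he : ({n | (d:ℤ) ∣ n} ∩ MB ((∅ : Finset ℕ) : Set ℕ)) = ∅ := by ext; simp [MB]
      have hf0 := hf ∅ ∅ (by simp)
      have hg0 := hg ∅ ∅ (by simp)
      simp at hf0 hg0
      rw [he, hf0, hg0]
    | insert s S hs ih =>
      intro d hPd
      have ih := ih fun t ht => hS t (Finset.mem_insert_of_mem ht)
      have hPs := hP d s hPd (hS s (Finset.mem_insert_self _ _))
      set X : Set ℤ := {n | (d:ℤ) ∣ n} ∩ MB S
      set Y : Set ℤ := {n | ((Nat.lcm d s : ℕ):ℤ) ∣ n} with hY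
      have hlcm : ∀ n : ℤ, ((Nat.lcm d s : ℕ):ℤ) ∣ n ↔ (d:ℤ) ∣ n ∧ (s:ℤ) ∣ n := by
        intro n
        simp only [Int.natCast_dvd]
        exact Nat.lcm_dvd_iff
      have hU : {n | (d:ℤ) ∣ n} ∩ MB (insert s S : Finset ℕ) = X ∪ Y := by
        ext n
        simp only [X, hY, MB, Set.mem_inter_iff, Set.mem_ofPred_eq, Finset.coe_insert,
          Set.mem_insert_iff, exists_eq_or_imp, Set.mem_union, hlcm, and_or_left]
        exact or_comm
      have hI : X ∩ Y = Y ∩ MB S := by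
        ext n
        simp only [X, hY, Set.mem_inter_iff, Set.mem_ofPred_eq, hlcm]
        tauto
      have e1 := add_union_inter hf X Y
      have e2 := add_union_inter hg X Y
      rw [hI] at e1 e2
      rw [hU]
      have := ih d hPd
      have := ih _ hPs
      have := hd _ hPs
      simp only [hY] at *
      linarith
  have := key 1 h1
  simpa using this

/-! ### Logarithmic density and the Davenport-Erdős theorem -/

/-- The sum of the reciprocals of the elements of `A` in `[1, L]`. -/
def recSum (A : Set ℤ) (L : ℕ) : ℝ := ∑ n ∈ Finset.Icc 1 L, if (n:ℤ) ∈ A then (n:ℝ)⁻¹ else 0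

/-- The logarithmically weighted proportion of `A` in `[1, L]`. -/
def logProp (A : Set ℤ) (L : ℕ) : ℝ := recSum A L / Real.log L

lemma logDensity_iff (A : Set ℤ) (d : ℝ) :
    logDensity A d ↔ Tendsto (logProp A) atTop (𝓝 d) := by
  have : logProp A = fun L : ℕ =>
      (∑ n ∈ Finset.Icc (1:ℤ) (L:ℤ), if n ∈ A then (n:ℝ)⁻¹ else 0) / Real.log L := by
    funext L
    rw [logProp, recSum]
    congr 1
    have : Finset.Icc (1:ℤ) (L:ℤ) = (Finset.Icc 1 L).map Nat.castEmbedding := by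
      ext n
      simp only [Finset.mem_Icc, Finset.mem_map, Nat.castEmbedding_apply]
      constructor
      · rintro ⟨h1, h2⟩
        exact ⟨n.toNat, by omega, by omega⟩
      · rintro ⟨k, hk, rfl⟩; omega
    rw [this, Finset.sum_map]
    simp
  rw [this]; rfl

lemma recSum_succ (A : Set ℤ) (L : ℕ) :
    recSum A (L + 1) = recSum A L + if ((L + 1 : ℕ):ℤ) ∈ A then ((L + 1 : ℕ):ℝ)⁻¹ else 0 :=
  Finset.sum_Icc_succ_top (by omega) _

lemma recSum_nonneg (A : Set ℤ) (L : ℕ) : 0 ≤ recSum A L :=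
  Finset.sum_nonneg fun n _ => by split_ifs <;> positivity

lemma recSum_univ (L : ℕ) : recSum Set.univ L = (harmonic L : ℝ) := by
  rw [harmonic_eq_sum_Icc, recSum]; push_cast; simp

lemma recSum_union {A B : Set ℤ} (h : Disjoint A B) (L : ℕ) :
    recSum (A ∪ B) L = recSum A L + recSum B L := by
  rw [recSum, recSum, recSum, ← Finset.sum_add_distrib]
  refine Finset.sum_congr rfl fun n _ => ?_
  have : (n:ℤ) ∈ A → (n:ℤ) ∉ B := fun ha => Set.disjoint_left.1 h ha
  by_cases hA : (n:ℤ) ∈ A <;> by_cases hB : (n:ℤ) ∈ B <;> simp_all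

lemma recSum_le (A : Set ℤ) (L : ℕ) : recSum A L ≤ 1 + Real.log L := by
  refine le_trans ?_ ((recSum_univ L).le.trans (harmonic_le_one_add_log L))
  refine Finset.sum_le_sum fun n _ => ?_
  simp only [Set.mem_univ, if_true]
  split_ifs
  · exact le_rfl
  · positivity

lemma recSum_shift (A : Set ℤ) (L : ℕ) :
    -1 ≤ recSum {n | n + 1 ∈ A} L - recSum A (L + 1) ∧
      recSum {n | n + 1 ∈ A} L - recSum A (L + 1) ≤ 1 - ((L + 1 : ℕ):ℝ)⁻¹ := by
  induction L with
  | zero => simp only [recSum]; norm_num; split_ifs <;> norm_num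
  | succ L ih =>
    rw [recSum_succ A (L + 1), recSum_succ _ L]
    have h1 : ((L + 1 + 1 : ℕ):ℝ)⁻¹ ≤ ((L + 1 : ℕ):ℝ)⁻¹ :=
      inv_anti₀ (by positivity) (by push_cast; linarith)
    have h2 : ((L + 1 : ℕ):ℤ) ∈ {n : ℤ | n + 1 ∈ A} ↔ ((L + 1 + 1 : ℕ):ℤ) ∈ A := by
      simp only [Set.mem_ofPred_eq]; push_cast; rfl
    rw [if_congr h2 rfl rfl]
    split_ifs <;> constructor <;> linarith [ih.1, ih.2]

lemma tendsto_log_nat : Tendsto (fun L : ℕ => Real.log L) atTop atTop :=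
  Real.tendsto_log_atTop.comp tendsto_natCast_atTop_atTop

lemma logProp_univ : Tendsto (logProp Set.univ) atTop (𝓝 1) := by
  have h : Tendsto (fun L : ℕ => 1 + 1 / Real.log L) atTop (𝓝 (1 + 0)) :=
    tendsto_const_nhds.add (tendsto_const_nhds.div_atTop tendsto_log_nat)
  rw [add_zero] at h
  refine tendsto_of_tendsto_of_tendsto_of_le_of_le' tendsto_const_nhds h ?_ ?_
  · filter_upwards [eventually_ge_atTop 2] with L hL
    have hl : 0 < Real.log L := Real.log_pos (by exact_mod_cast hL)
    rw [logProp, recSum_univ, le_div_iff₀ hl, one_mul]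
    refine le_trans (Real.log_le_log (by positivity) ?_) (log_add_one_le_harmonic L)
    push_cast; linarith
  · filter_upwards [eventually_ge_atTop 2] with L hL
    have hl : 0 < Real.log L := Real.log_pos (by exact_mod_cast hL)
    rw [logProp, div_le_iff₀ hl, add_mul, one_div_mul_cancel hl.ne', one_mul, add_comm]
    exact recSum_le _ _

lemma logProp_shift (A : Set ℤ) :
    Tendsto (fun L => logProp {n | n + 1 ∈ A} L - logProp A L) atTop (𝓝 0) := by
  have h : Tendsto (fun L : ℕ => 2 / Real.log L) atTop (𝓝 0) :=
    tendsto_const_nhds.div_atTop tendsto_log_nat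
  refine squeeze_zero_norm' ?_ h
  filter_upwards [eventually_ge_atTop 2] with L hL
  have hl : 0 < Real.log L := Real.log_pos (by exact_mod_cast hL)
  rw [logProp, logProp, ← sub_div, Real.norm_eq_abs, abs_div, abs_of_pos hl]
  gcongr
  have h1 := recSum_shift A L
  have h2 := recSum_succ A L
  have h3 : ((L + 1 : ℕ):ℝ)⁻¹ ≤ 1 := inv_le_one_of_one_le₀ (by push_cast; linarith)
  have h4 : 0 ≤ ((L + 1 : ℕ):ℝ)⁻¹ := by positivity
  rw [abs_le]
  split_ifs at h2 <;> constructor <;> linarith [h1.1, h1.2]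

/-- The limit of the logarithmically weighted proportions along an ultrafilter. -/
def mu (U : Ultrafilter ℕ) (A : Set ℤ) : ℝ := limUnder (U : Filter ℕ) (logProp A)

section
variable {U : Ultrafilter ℕ}

lemma tendsto_mu (hU : (U : Filter ℕ) ≤ atTop) (A : Set ℤ) :
    Tendsto (logProp A) U (𝓝 (mu U A)) := by
  apply tendsto_nhds_limUnder
  have hev : ∀ᶠ L in (U : Filter ℕ), logProp A L ∈ Set.Icc (0:ℝ) 2 := by
    apply hU
    filter_upwards [tendsto_log_nat.eventually_ge_atTop 1] with L hL
    have hl : 0 < Real.log L := by linarith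
    refine ⟨div_nonneg (recSum_nonneg _ _) hl.le, ?_⟩
    rw [logProp, div_le_iff₀ hl]
    linarith [recSum_le A L]
  obtain ⟨x, _, hx⟩ := isCompact_Icc.ultrafilter_le_nhds (U.map (logProp A))
    (by rwa [Filter.le_principal_iff])
  exact ⟨x, hx⟩

lemma mu_isMean (hU : (U : Filter ℕ) ≤ atTop) : IsMean (mu U) where
  nonneg A := by
    refine ge_of_tendsto (tendsto_mu hU A) (hU ?_)
    filter_upwards [eventually_ge_atTop 2] with L hL
    have hl : 0 < Real.log L := Real.log_pos (by exact_mod_cast hL)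
    exact div_nonneg (recSum_nonneg _ _) hl.le
  univ := tendsto_nhds_unique (tendsto_mu hU _) (logProp_univ.mono_left hU)
  union A B h := by
    refine tendsto_nhds_unique (tendsto_mu hU _) ?_
    have := (tendsto_mu hU A).add (tendsto_mu hU B)
    refine this.congr fun L => ?_
    rw [logProp, logProp, logProp, recSum_union h, add_div]
  shift A := by
    have := tendsto_nhds_unique ((tendsto_mu hU {n | n + 1 ∈ A}).sub (tendsto_mu hU A))
      ((logProp_shift A).mono_left hU)
    linarith

/-- The sum of the reciprocals of the elements of `A` all of whose prime factors are at most
`L`. -/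
def smoothSum (L : ℕ) (A : Set ℤ) : ℝ :=
  ∑' n : (L + 1).smoothNumbers, if ((n:ℕ):ℤ) ∈ A then ((n:ℕ):ℝ)⁻¹ else 0

lemma summable_smoothSum (L : ℕ) (A : Set ℤ) :
    Summable fun n : (L + 1).smoothNumbers => if ((n:ℕ):ℤ) ∈ A then ((n:ℕ):ℝ)⁻¹ else 0 := by
  refine Summable.of_nonneg_of_le (fun n => ?_) (fun n => ?_) (summable_smooth (L + 1)).1
  · split_ifs <;> positivity
  · split_ifs
    · exact le_rfl
    · positivity

lemma smoothSum_union (L : ℕ) (A B : Set ℤ) (h : Disjoint A B) :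
    smoothSum L (A ∪ B) = smoothSum L A + smoothSum L B := by
  rw [smoothSum, smoothSum, smoothSum,
    ← (summable_smoothSum L A).tsum_add (summable_smoothSum L B)]
  refine tsum_congr fun n => ?_
  have : ((n:ℕ):ℤ) ∈ A → ((n:ℕ):ℤ) ∉ B := fun ha => Set.disjoint_left.1 h ha
  by_cases hA : ((n:ℕ):ℤ) ∈ A <;> by_cases hB : ((n:ℕ):ℤ) ∈ B <;> simp_all

lemma smoothSum_univ_le (L : ℕ) (hL : 2 ≤ L) :
    smoothSum L Set.univ ≤ Real.exp 6 * (1 + Real.log L) := by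
  simpa [smoothSum] using sum_smooth_le L hL

lemma smoothSum_dvd (L d : ℕ) (hd : d ∈ (L + 1).smoothNumbers) :
    smoothSum L {n | (d:ℤ) ∣ n} = smoothSum L Set.univ * (1 / d) := by
  have hd0 : d ≠ 0 := Nat.ne_zero_of_mem_smoothNumbers hd
  let g : (L + 1).smoothNumbers → (L + 1).smoothNumbers :=
    fun k => ⟨d * k, Nat.mul_mem_smoothNumbers hd k.2⟩
  have hg : Function.Injective g := by
    intro a b hab
    have := congrArg Subtype.val hab
    simp only [g] at this
    exact Subtype.ext (Nat.eq_of_mul_eq_mul_left (Nat.pos_of_ne_zero hd0) this)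
  rw [smoothSum, ← hg.tsum_eq, smoothSum, ← tsum_mul_right]
  · refine tsum_congr fun k => ?_
    simp only [g, Set.mem_ofPred_eq, Set.mem_univ, if_true]
    rw [if_pos (by push_cast; exact dvd_mul_right _ _)]
    push_cast
    rw [mul_inv, one_div, mul_comm]
  · intro n hn
    rw [Function.mem_support] at hn
    have hdn : (d:ℤ) ∣ ((n:ℕ):ℤ) := by
      by_contra hc
      exact hn (if_neg hc)
    obtain ⟨k, hk⟩ := Int.natCast_dvd_natCast.1 hdn
    exact ⟨⟨k, Nat.mem_smoothNumbers_of_dvd n.2 (hk ▸ dvd_mul_left _ _)⟩, Subtype.ext hk.symm⟩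

/-- Under the weights `1/n` on smooth numbers, sets of multiples of finite sets of smooth numbers
have the same proportion as in the integers. -/
lemma smoothSum_MB {m : Set ℤ → ℝ} (h : IsMean m) (L : ℕ) (S : Finset ℕ)
    (hS : ∀ s ∈ S, s ∈ (L + 1).smoothNumbers) :
    smoothSum L (MB S) = smoothSum L Set.univ * m (MB S) := by
  refine agree_MB (f := smoothSum L) (g := fun A => smoothSum L Set.univ * m A)
    (smoothSum_union L) (fun A B hAB => ?_) (P := fun s => s ∈ (L + 1).smoothNumbers)
    (fun a b ha hb => ?_) ?_ (fun d hd => ?_) S hS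
  · rw [h.union A B hAB, mul_add]
  · exact Nat.mem_smoothNumbers_of_dvd (Nat.mul_mem_smoothNumbers ha hb) (Nat.lcm_dvd_mul a b)
  · simp [Nat.mem_smoothNumbers]
  · have := h.cls_eq (Nat.pos_of_ne_zero (Nat.ne_zero_of_mem_smoothNumbers hd)) 0
    simp only [cls, sub_zero] at this
    rw [smoothSum_dvd L d hd, this]

lemma mem_smooth_of_le {L n : ℕ} (h1 : 1 ≤ n) (h2 : n ≤ L) : n ∈ (L + 1).smoothNumbers := by
  rw [Nat.mem_smoothNumbers]
  exact ⟨by omega, fun p hp => by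
    have := Nat.le_of_mem_primeFactorsList hp; omega⟩

lemma recSum_le_smoothSum {A A' : Set ℤ} {L : ℕ}
    (h : ∀ n : ℕ, 1 ≤ n → n ≤ L → (n:ℤ) ∈ A → (n:ℤ) ∈ A') : recSum A L ≤ smoothSum L A' := by
  have hnn : ∀ n : (L + 1).smoothNumbers,
      0 ≤ (if ((n:ℕ):ℤ) ∈ A' then ((n:ℕ):ℝ)⁻¹ else 0) := fun n => by split_ifs <;> positivity
  refine le_trans ?_ ((summable_smoothSum L A').sum_le_tsum
    ((Finset.Icc 1 L).subtype (· ∈ (L + 1).smoothNumbers)) fun n _ => hnn n)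
  rw [Finset.sum_subtype_eq_sum_filter (f := fun n : ℕ => if (n:ℤ) ∈ A' then (n:ℝ)⁻¹ else 0),
    Finset.filter_true_of_mem fun n hn => mem_smooth_of_le (Finset.mem_Icc.1 hn).1
      (Finset.mem_Icc.1 hn).2]
  refine Finset.sum_le_sum fun n hn => ?_
  by_cases hA : (n:ℤ) ∈ A
  · rw [if_pos hA, if_pos (h n (Finset.mem_Icc.1 hn).1 (Finset.mem_Icc.1 hn).2 hA)]
  · rw [if_neg hA]; split_ifs <;> positivity

/-- The elements of `T` in `[1, K]`. -/
def trunc (T : Set ℕ) (K : ℕ) : Finset ℕ := (Finset.Icc 1 K).filter (· ∈ T)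

lemma trunc_mono (T : Set ℕ) : Monotone (trunc T) := fun _ _ h =>
  Finset.filter_subset_filter _ (Finset.Icc_subset_Icc le_rfl h)

lemma trunc_subset (T : Set ℕ) (K : ℕ) : (trunc T K : Set ℕ) ⊆ T := fun t ht => by
  simpa using (Finset.mem_filter.1 (Finset.mem_coe.1 ht)).2

/-- Davenport-Erdős inequality: an initial segment of `M_T` not captured by the small elements of
`T` is controlled by the increments of the densities of the truncations. -/
lemma recSum_trunc_le {m : Set ℤ → ℝ} (h : IsMean m) (T : Set ℕ) {K L : ℕ} (hKL : K ≤ L)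
    (hL : 2 ≤ L) : recSum (MB T \ MB (trunc T K)) L
      ≤ Real.exp 6 * (1 + Real.log L) * (m (MB (trunc T L)) - m (MB (trunc T K))) := by
  have hsub : MB (trunc T K) ⊆ MB (trunc T L) := MB_mono (by exact_mod_cast trunc_mono T hKL)
  have hsm : ∀ J ≤ L, ∀ s ∈ trunc T J, s ∈ (L + 1).smoothNumbers := by
    intro J hJ s hs
    have := Finset.mem_Icc.1 (Finset.mem_filter.1 hs).1
    exact mem_smooth_of_le this.1 (this.2.trans hJ)
  have hW : smoothSum L (MB (trunc T L) \ MB (trunc T K))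
      = smoothSum L Set.univ * (m (MB (trunc T L)) - m (MB (trunc T K))) := by
    have := smoothSum_union L (MB (trunc T K)) (MB (trunc T L) \ MB (trunc T K))
      Set.disjoint_sdiff_right
    rw [Set.union_sdiff_cancel hsub, smoothSum_MB h L _ (hsm L le_rfl),
      smoothSum_MB h L _ (hsm K hKL)] at this
    linarith
  calc _ ≤ smoothSum L (MB (trunc T L) \ MB (trunc T K)) := by
        refine recSum_le_smoothSum ?_
        rintro n h1 h2 ⟨⟨t, ht, htn⟩, hn⟩
        refine ⟨⟨t, ?_, htn⟩, hn⟩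
        have htn' := Int.natCast_dvd_natCast.1 htn
        have h3 := Nat.le_of_dvd h1 htn'
        have h4 := Nat.pos_of_dvd_of_pos htn' h1
        simp only [trunc, Finset.coe_filter, Finset.mem_Icc, Set.mem_ofPred_eq]
        exact ⟨⟨h4, h3.trans h2⟩, ht⟩
    _ = _ := hW
    _ ≤ _ := mul_le_mul_of_nonneg_right (smoothSum_univ_le L hL)
        (sub_nonneg.2 (h.mono hsub))

/-- Davenport-Erdős theorem: `M_T` is approximated by the sets of multiples of the finite
subsets of `T`. -/
lemma mu_cont (hU : (U : Filter ℕ) ≤ atTop) (T : Set ℕ) {ε : ℝ} (hε : 0 < ε) :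
    ∃ K, mu U (MB T) ≤ mu U (MB (trunc T K)) + ε := by
  have h := mu_isMean hU
  set a : ℕ → ℝ := fun K => mu U (MB (trunc T K)) with ha
  have hmono : Monotone a := fun K L hKL =>
    h.mono (MB_mono (by exact_mod_cast trunc_mono T hKL))
  have hbdd : BddAbove (Set.range a) := ⟨1, by rintro _ ⟨K, rfl⟩; exact h.le_one _⟩
  have hlim := tendsto_atTop_ciSup hmono hbdd
  set s := ⨆ K, a K
  have hC : 0 < 2 * Real.exp 6 := by positivity
  obtain ⟨K, hK⟩ := (hlim.eventually (lt_mem_nhds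
    (show s - ε / (2 * Real.exp 6) < s by linarith [div_pos hε hC]))).exists
  refine ⟨K, ?_⟩
  have hb : mu U (MB T \ MB (trunc T K)) ≤ 2 * Real.exp 6 * (s - a K) := by
    refine le_of_tendsto (tendsto_mu hU _) (hU ?_)
    filter_upwards [tendsto_log_nat.eventually_ge_atTop 1, eventually_ge_atTop 2,
      eventually_ge_atTop K] with L h1 h2 h3
    have hl : 0 < Real.log L := by linarith
    rw [logProp, div_le_iff₀ hl]
    have hs : a L ≤ s := le_ciSup hbdd L
    have hs' : a K ≤ a L := hmono h3
    calc _ ≤ Real.exp 6 * (1 + Real.log L) * (a L - a K) := recSum_trunc_le h T h3 h2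
      _ ≤ Real.exp 6 * (Real.log L + Real.log L) * (s - a K) := by
        gcongr
      _ = _ := by ring
  rw [h.diff (MB_mono (trunc_subset T K))] at hb
  have : 2 * Real.exp 6 * (s - a K) ≤ ε := by
    have h5 : s - a K ≤ ε / (2 * Real.exp 6) := by linarith
    calc _ ≤ 2 * Real.exp 6 * (ε / (2 * Real.exp 6)) := by gcongr
      _ = ε := by field_simp
  linarith

/-- An invariant mean that extends the logarithmic density of sets of multiples and satisfies the
Davenport-Erdős continuity property. -/
structure IsLogMean (m : Set ℤ → ℝ) : Prop extends IsMean m where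
  cont : ∀ T : Set ℕ, ∀ ε : ℝ, 0 < ε → ∃ S : Finset ℕ, ↑S ⊆ T ∧ 0 ∉ S ∧ m (MB T) ≤ m (MB S) + ε
  logDensity : ∀ T : Set ℕ, logDensity (MB T) (m (MB T))

lemma zero_notMem_trunc (T : Set ℕ) (K : ℕ) : 0 ∉ trunc T K := by simp [trunc]

lemma mu_le_mu {V : Ultrafilter ℕ} (hU : (U : Filter ℕ) ≤ atTop) (hV : (V : Filter ℕ) ≤ atTop)
    (T : Set ℕ) : mu U (MB T) ≤ mu V (MB T) := by
  refine le_of_forall_pos_le_add fun ε hε => ?_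
  obtain ⟨K, hK⟩ := mu_cont hU T hε
  rw [(mu_isMean hU).eq_MB (mu_isMean hV) _ (zero_notMem_trunc T K)] at hK
  linarith [(mu_isMean hV).mono (MB_mono (trunc_subset T K))]

end

lemma exists_isLogMean : ∃ m, IsLogMean m := by
  have hU : (hyperfilter ℕ : Filter ℕ) ≤ atTop := Nat.hyperfilter_le_atTop
  refine ⟨mu (hyperfilter ℕ), mu_isMean hU, fun T ε hε => ?_, fun T => ?_⟩
  · obtain ⟨K, hK⟩ := mu_cont hU T hε
    exact ⟨_, trunc_subset T K, zero_notMem_trunc T K, hK⟩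
  · rw [logDensity_iff, tendsto_iff_ultrafilter]
    intro V hV
    rw [le_antisymm (mu_le_mu hU hV T) (mu_le_mu hV hU T)]
    exact tendsto_mu hV _

lemma IsLogMean.eq_of_logDensity {m : Set ℤ → ℝ} (h : IsLogMean m) {T : Set ℕ} {d : ℝ}
    (hd : BFree.logDensity (MB T) d) : m (MB T) = d :=
  tendsto_nhds_unique (h.logDensity T) hd

/-! ### Rough elements and Behrend sets -/

section
variable {m : Set ℤ → ℝ}

/-- A set equidistributed over the classes modulo `v` is independent of every `v`-periodic set. -/
lemma IsMean.indep (h : IsMean m) {X P : Set ℤ} {v : ℕ} (hv : 0 < v)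
    (hX : ∀ u, m (X ∩ cls u v) = m X / v) (hP : ∀ n, n + (v:ℤ) ∈ P ↔ n ∈ P) :
    m (X ∩ P) = m X * m P := by
  rw [h.sum_cls (X ∩ P) hv, h.sum_cls P hv, Finset.mul_sum]
  refine Finset.sum_congr rfl fun r _ => ?_
  by_cases hr : (r:ℤ) ∈ P
  · have hs : cls r v ⊆ P := fun n hn => (periodic_cls hP hn).2 hr
    rw [Set.inter_assoc, Set.inter_eq_right.2 hs, hX, h.cls_eq hv]
    ring
  · have hs : P ∩ cls r v = ∅ := by
      ext n; simp only [Set.mem_inter_iff, Set.mem_empty_iff_false, iff_false, not_and]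
      exact fun h1 h2 => hr ((periodic_cls hP h2).1 h1)
    rw [Set.inter_assoc, hs, Set.inter_empty, h.empty, mul_zero]

/-- A set of multiples of numbers prime to `v` is equidistributed over the classes modulo `v`. -/
lemma IsLogMean.inter_cls_MB (h : IsLogMean m) {T : Set ℕ} {v : ℕ} (hv : 0 < v)
    (hT : ∀ t ∈ T, Nat.Coprime t v) (u : ℤ) : m (MB T ∩ cls u v) = m (MB T) / v := by
  have hfin : ∀ S : Finset ℕ, ↑S ⊆ T → m (MB S ∩ cls u v) = m (MB S) / v := fun S hS =>
    h.inter_cls (MB_periodic fun s hs => Finset.dvd_prod_of_mem id hs) hv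
      (Nat.Coprime.prod_left fun s hs => hT s (hS hs)) u
  have hv' : (0:ℝ) < v := by exact_mod_cast hv
  have hv1 : (1:ℝ) ≤ v := by exact_mod_cast hv
  apply le_antisymm
  · refine le_of_forall_pos_le_add fun ε hε => ?_
    obtain ⟨S, hS, -, hm⟩ := h.cont T ε hε
    have h1 : MB T ∩ cls u v ⊆ (MB S ∩ cls u v) ∪ (MB T \ MB S) := by
      rintro n ⟨h1, h2⟩
      by_cases hn : n ∈ MB (S : Set ℕ)
      · exact Or.inl ⟨hn, h2⟩
      · exact Or.inr ⟨h1, hn⟩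
    have h2 := (h.mono h1).trans (h.union_le _ _)
    rw [hfin S hS, h.diff (MB_mono hS)] at h2
    have h3 : m (MB S) / v ≤ m (MB T) / v := by gcongr; exact h.mono (MB_mono hS)
    linarith
  · refine le_of_forall_pos_le_add fun ε hε => ?_
    obtain ⟨S, hS, -, hm⟩ := h.cont T ε hε
    have h1 := h.mono (Set.inter_subset_inter_left (cls u v) (MB_mono hS))
    rw [hfin S hS] at h1
    have h2 : m (MB T) / v ≤ (m (MB S) + ε) / v := by gcongr
    rw [add_div] at h2
    have h3 : ε / v ≤ ε := div_le_self hε.le hv1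
    linarith

/-- The elements of `T` all of whose prime factors exceed `y`. -/
def rough (T : Set ℕ) (y : ℕ) : Set ℕ := {t ∈ T | ∀ p, p.Prime → p ∣ t → y < p}

lemma rough_anti (T : Set ℕ) {y z : ℕ} (h : y ≤ z) : rough T z ⊆ rough T y :=
  fun _ ht => ⟨ht.1, fun p hp hpt => h.trans_lt (ht.2 p hp hpt)⟩

lemma rough_coprime {T : Set ℕ} {y t v : ℕ} (ht : t ∈ rough T y)
    (hv : ∀ p, p.Prime → p ∣ v → p ≤ y) : Nat.Coprime t v :=
  Nat.coprime_of_dvd fun p hp h1 h2 => by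
    have := ht.2 p hp h1
    have := hv p hp h2
    omega

/-- The multiples of the rough elements of `T` have density tending to `0`. -/
def Small (m : Set ℤ → ℝ) (T : Set ℕ) : Prop :=
  ∀ ε : ℝ, 0 < ε → ∀ᶠ y in atTop, m (MB (rough T y)) < ε

lemma IsMean.exists_of_not_small (h : IsMean m) {T : Set ℕ} (hT : ¬ Small m T) :
    ∃ ε : ℝ, 0 < ε ∧ ∀ y, ε ≤ m (MB (rough T y)) := by
  simp only [Small, eventually_atTop] at hT
  push Not at hT
  obtain ⟨ε, hε, hy⟩ := hT
  refine ⟨ε, hε, fun y => ?_⟩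
  obtain ⟨z, hz, hm⟩ := hy y
  exact hm.trans (h.mono (MB_mono (rough_anti T hz)))

/-- Zero-one law: if the rough elements of `T` keep a positive density of multiples, then `M_T`
has full density, as the rough multiples are independent of any finite part of `T`. -/
lemma IsLogMean.eq_one_of_rough (h : IsLogMean m) {T : Set ℕ} {ε : ℝ} (hε : 0 < ε)
    (hy : ∀ y, ε ≤ m (MB (rough T y))) : m (MB T) = 1 := by
  refine le_antisymm (h.le_one _) ?_
  have key : ∀ δ : ℝ, 0 < δ → ε * (1 - m (MB T)) ≤ δ := by
    intro δ hδ
    obtain ⟨S, hS, h0, hm⟩ := h.cont T δ hδ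
    set v := ∏ s ∈ S, s with hv
    have hv0 : 0 < v := Finset.prod_pos fun s hs =>
      Nat.pos_of_ne_zero (by rintro rfl; exact h0 hs)
    set R := rough T v
    have hind : m (MB R ∩ MB (S : Set ℕ)) = m (MB R) * m (MB S) :=
      h.indep hv0 (fun u => h.inter_cls_MB hv0 (fun t ht => rough_coprime ht
        fun p _ hpv => Nat.le_of_dvd hv0 hpv) u)
        (MB_periodic fun s hs => Finset.dvd_prod_of_mem id hs)
    have h1 := add_union_inter h.union (MB R) (MB (S : Set ℕ))
    have h2 : m (MB R ∪ MB (S : Set ℕ)) ≤ m (MB T) :=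
      h.mono (Set.union_subset (MB_mono fun t ht => ht.1) (MB_mono hS))
    have h3 := hy v
    have h4 := h.le_one (MB (S : Set ℕ))
    have h5 := h.mono (MB_mono hS)
    rw [hind] at h1
    have h6 : ε * (1 - m (MB T)) ≤ m (MB R) * (1 - m (MB S)) := by
      have h7 := h.le_one (MB T)
      gcongr
      exact h.nonneg _
    linarith
  by_contra hc
  push Not at hc
  have := key (ε * (1 - m (MB T)) / 2) (by have := mul_pos hε (sub_pos.2 hc); linarith)
  have := mul_pos hε (sub_pos.2 hc)
  linarith

/-- If the rough elements of `T` are negligible, the class of `1` modulo a highly divisible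
number witnesses that `M_T` does not have full density. -/
lemma IsLogMean.lt_one_of_small (h : IsLogMean m) {T : Set ℕ} (hT : Small m T) :
    m (MB T) < 1 := by
  obtain ⟨y, hy⟩ := (hT 1 one_pos).exists
  set v := y.factorial
  have hv : 0 < v := y.factorial_pos
  have hv' : (0:ℝ) < v := by exact_mod_cast hv
  have hsub : MB T ∩ cls 1 v ⊆ MB (rough T y) ∩ cls 1 v := by
    rintro n ⟨⟨t, ht, htn⟩, hn⟩
    refine ⟨⟨t, ⟨ht, fun p hp hpt => ?_⟩, htn⟩, hn⟩
    by_contra hc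
    have h1 : (p:ℤ) ∣ n - 1 := (Int.natCast_dvd_natCast.2
      ((Nat.Prime.dvd_factorial hp).2 (not_lt.1 hc))).trans hn
    have h2 : (p:ℤ) ∣ n := (Int.natCast_dvd_natCast.2 hpt).trans htn
    have h3 : (p:ℤ) ∣ 1 := by simpa using dvd_sub h2 h1
    exact hp.one_lt.ne' (by exact_mod_cast Int.eq_one_of_dvd_one (by positivity) h3)
  have h1 := h.mono hsub
  rw [h.inter_cls_MB hv fun t ht => rough_coprime ht
    fun p hp hpv => (Nat.Prime.dvd_factorial hp).1 hpv] at h1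
  have h2 : m (MB (rough T y)) / v < 1 / v := by gcongr
  have h3 := add_union_inter h.union (MB T) (cls 1 v)
  have h4 := h.le_one (MB T ∪ cls 1 v)
  rw [h.cls_eq hv] at h3
  linarith

lemma IsLogMean.small_of_lt_one (h : IsLogMean m) {T : Set ℕ} (hT : m (MB T) < 1) :
    Small m T := by
  by_contra hc
  obtain ⟨ε, hε, hy⟩ := h.exists_of_not_small hc
  exact hT.ne (h.eq_one_of_rough hε hy)

/-- Removing an element other than `1` does not destroy full density. -/
lemma IsLogMean.eq_one_diff (h : IsLogMean m) {T : Set ℕ} (hT : m (MB T) = 1) {t : ℕ}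
    (ht0 : t ≠ 0) (ht : t ≠ 1) : m (MB (T \ {t})) = 1 := by
  have hs : ¬ Small m T := fun hs => (h.lt_one_of_small hs).ne hT
  obtain ⟨ε, hε, hy⟩ := h.exists_of_not_small hs
  refine h.eq_one_of_rough hε fun y => (hy (max y t)).trans (h.mono (MB_mono ?_))
  refine fun s hs => ⟨⟨hs.1, ?_⟩, (rough_anti T (le_max_left y t) hs).2⟩
  rintro rfl
  have := hs.2 _ (Nat.minFac_prime ht) (Nat.minFac_dvd _)
  have := Nat.minFac_le (Nat.pos_of_ne_zero ht0)
  omega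

/-- If `M_T` has full density, almost every multiple of `g` is a multiple of some `g t`, `t ∈ T`.
-/
lemma IsLogMean.null_dvd (h : IsLogMean m) {T : Set ℕ} (hT : m (MB T) = 1) {g : ℕ} (hg : 0 < g) :
    m {n | (g:ℤ) ∣ n ∧ ∀ t ∈ T, ¬ ((g * t : ℕ):ℤ) ∣ n} = 0 := by
  have h' := h.scale hg
  have h1 : 1 ≤ (g:ℝ) * m {n | (g:ℤ) ∣ n ∧ n / g ∈ MB T} := by
    refine le_of_forall_pos_le_add fun ε hε => ?_
    obtain ⟨S, hS, h0, hm⟩ := h.cont T ε hε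
    rw [hT, h.eq_MB h' S h0] at hm
    have := h'.mono (MB_mono hS)
    linarith
  have h2 := h'.diff (Set.subset_univ (MB T))
  rw [h'.univ] at h2
  have h3 := h'.nonneg (Set.univ \ MB T)
  have h4 : (g:ℝ) * m {n | (g:ℤ) ∣ n ∧ n / g ∈ Set.univ \ MB T} = 0 := by linarith
  have hg' : (g:ℝ) ≠ 0 := by positivity
  have h5 := (mul_eq_zero.1 h4).resolve_left hg'
  refine le_antisymm (le_of_le_of_eq (h.mono ?_) h5) (h.nonneg _)
  rintro n ⟨hgn, hn⟩
  refine ⟨hgn, Set.mem_univ _, ?_⟩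
  rintro ⟨t, ht, htn⟩
  refine hn t ht ?_
  obtain ⟨k, rfl⟩ := hgn
  rw [Int.mul_ediv_cancel_left _ (by exact_mod_cast hg.ne')] at htn
  push_cast
  exact mul_dvd_mul_left _ htn

/-- No rescaled copy `g T` of a set `T ∌ 1` with `M_T` of full density is contained in `C`. -/
def NoBehrend (m : Set ℤ → ℝ) (C : Set ℕ) : Prop :=
  ∀ (g : ℕ) (T : Set ℕ), (∀ t ∈ T, g * t ∈ C) → 1 ∉ T → m (MB T) < 1

lemma NoBehrend.mono {C D : Set ℕ} (hD : NoBehrend m D) (h : C ⊆ D) : NoBehrend m C :=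
  fun g T hT => hD g T fun t ht => h (hT t ht)

lemma IsLogMean.noBehrend_of_taut (h : IsLogMean m) {C : Set ℕ} (h0 : 0 ∉ C) (hC : Taut C) :
    NoBehrend m C := by
  intro g T hT h1
  by_contra hc
  have hT1 : m (MB T) = 1 := le_antisymm (h.le_one _) (not_lt.1 hc)
  obtain ⟨t, ht⟩ : T.Nonempty := by
    rw [Set.nonempty_iff_ne_empty]
    rintro rfl
    have : MB ∅ = ∅ := by ext; simp [MB]
    rw [this, h.empty] at hT1
    exact zero_ne_one hT1
  have hgt : g * t ≠ 0 := fun e => h0 (e ▸ hT t ht)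
  have hg : 0 < g := Nat.pos_of_ne_zero (left_ne_zero_of_mul hgt)
  have ht1 : t ≠ 1 := by rintro rfl; exact h1 ht
  have hnull := h.null_dvd (h.eq_one_diff hT1 (right_ne_zero_of_mul hgt) ht1) hg
  obtain ⟨d1, d2, hd1, hd2, hlt⟩ := hC _ (hT t ht)
  rw [← h.eq_of_logDensity hd1, ← h.eq_of_logDensity hd2] at hlt
  have hsub : MB C ⊆ MB (C \ {g * t}) ∪
      {n | (g:ℤ) ∣ n ∧ ∀ s ∈ T \ {t}, ¬ ((g * s : ℕ):ℤ) ∣ n} := by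
    rintro n ⟨c, hc, hcn⟩
    by_cases hn : n ∈ MB (C \ {g * t})
    · exact Or.inl hn
    · right
      have hce : c = g * t := by
        by_contra hne
        exact hn ⟨c, ⟨hc, hne⟩, hcn⟩
      refine ⟨(Int.natCast_dvd_natCast.2 (hce ▸ dvd_mul_right _ _)).trans hcn, ?_⟩
      intro s hs hsn
      exact hn ⟨g * s, ⟨hT s hs.1, fun e => hs.2 (Nat.eq_of_mul_eq_mul_left hg e)⟩, hsn⟩
  have := (h.mono hsub).trans (h.union_le _ _)
  linarith

end

/-! ### Positivity of patterns -/

lemma exists_crt (s : Finset ℕ) (hs : ∀ p ∈ s, p.Prime) (k : ℕ → ℕ) :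
    ∃ K : ℤ, ∀ p ∈ s, (p:ℤ) ∣ K - k p := by
  obtain ⟨K, hK⟩ := Nat.chineseRemainderOfFinset k id s (fun p hp => (hs p hp).ne_zero)
    (fun p hp q hq hpq => (Nat.coprime_primes (hs p hp) (hs q hq)).2 hpq)
  refine ⟨K, fun p hp => ?_⟩
  exact (Nat.modEq_iff_dvd.1 (hK p hp).symm)

/-- For a single prime `p`: with `m0 + i = g i * u i` and `L = g i * v i`, one can choose `k` such
that `p` divides none of the quotients `(m0 + i + L * k) / g i`. -/
lemma exists_avoid {I : Finset ℤ} {L : ℕ} (hL : 0 < L) {m0 : ℤ} {p : ℕ} (hp : p.Prime)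
    (hI : p ≤ I.card → ∀ i ∈ I, ∀ j ∈ I, i ≠ j → (p:ℤ) * (i - j) ∣ L)
    {u v g : ℤ → ℤ} (hu : ∀ i, m0 + i = g i * u i) (hv : ∀ i, (L:ℤ) = g i * v i)
    (hc : ∀ i, IsCoprime (u i) (v i)) :
    ∃ k : ℕ, ∀ i ∈ I, ¬ (p:ℤ) ∣ u i + v i * k := by
  have hpZ : Prime (p:ℤ) := Nat.prime_iff_prime_int.1 hp
  set J := I.filter fun i => ¬ (p:ℤ) ∣ v i with hJ
  have hcard : J.card < p := by
    by_contra hcon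
    have hcon := not_lt.1 hcon
    obtain ⟨i, hi, j, hj, hij⟩ := Finset.one_lt_card.1 (hp.one_lt.trans_le hcon)
    have hi' := Finset.mem_filter.1 hi
    have hj' := Finset.mem_filter.1 hj
    have hIL := hI (hcon.trans (Finset.card_le_card (Finset.filter_subset _ _))) i hi'.1 j hj'.1 hij
    -- the full power of `p` in `L` divides both `g i` and `g j`, hence `i - j`
    set a := L.factorization p
    have hpa : ((p:ℤ) ^ a) ∣ L := by exact_mod_cast Nat.ordProj_dvd L p
    have hg : ∀ i, ¬ (p:ℤ) ∣ v i → (p:ℤ) ^ a ∣ m0 + i := by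
      intro i hi
      have h1 : (p:ℤ) ^ a ∣ g i := by
        have h2 : IsCoprime ((p:ℤ) ^ a) (v i) :=
          IsCoprime.pow_left ((Prime.coprime_iff_not_dvd hpZ).2 hi)
        exact h2.dvd_of_dvd_mul_right (hv i ▸ hpa)
      rw [hu i]; exact h1.mul_right _
    have hd : (p:ℤ) ^ a ∣ i - j := by
      have := dvd_sub (hg i hi'.2) (hg j hj'.2)
      rwa [add_sub_add_left_eq_sub] at this
    have h3 : (p:ℤ) ^ (a + 1) ∣ L := by
      rw [pow_succ']; exact (mul_dvd_mul_left _ hd).trans hIL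
    exact Nat.pow_succ_factorization_not_dvd hL.ne' hp (by exact_mod_cast h3)
  by_contra hcon
  push Not at hcon
  choose f hfI hf using hcon
  have hfJ : ∀ k, f k ∈ J := by
    intro k
    refine Finset.mem_filter.2 ⟨hfI k, fun hpv => ?_⟩
    have h1 : (p:ℤ) ∣ u (f k) := (dvd_add_left (hpv.mul_right _)).1 (hf k)
    exact hpZ.not_isUnit ((hc (f k)).isUnit_of_dvd' h1 hpv)
  obtain ⟨k, hk, l, hl, hkl, he⟩ := Finset.exists_ne_map_eq_of_card_lt_of_maps_to
    (s := Finset.range p) (t := J) (by rwa [Finset.card_range]) (f := f) (fun k _ => hfJ k)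
  have hk' := Finset.mem_range.1 hk
  have hl' := Finset.mem_range.1 hl
  have h1 := hf k
  have h2 := hf l
  rw [he] at h1
  have h3 : (p:ℤ) ∣ v (f l) * ((k:ℤ) - l) := by
    have := dvd_sub h1 h2
    rwa [add_sub_add_left_eq_sub, ← mul_sub] at this
  have h4 := (hpZ.dvd_or_dvd h3).resolve_left (Finset.mem_filter.1 (hfJ l)).2
  have := Int.eq_zero_of_abs_lt_dvd h4 (by rw [abs_lt]; constructor <;> omega)
  omega

section
variable {m : Set ℤ → ℝ}

/-- Positivity of patterns. Inside the class of `m0` modulo `L`, the integers `x` for which all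
`x + i`, `i ∈ I`, are `C`-free have positive density unless some `c ∈ C` dividing `L` is an
obstruction; `L` has to contain enough of the primes up to `|I|`. One refines the class to a
class modulo `L y!` in which each `x + i` is a divisor of `L` times a number without prime
factors up to `y`; the divisors of such numbers lying in `C` are negligible. -/
lemma IsLogMean.pattern_pos (h : IsLogMean m) {C : Set ℕ} (hC : NoBehrend m C)
    (I : Finset ℤ) {L : ℕ} (hL : 0 < L) (m0 : ℤ)
    (h1 : ∀ c ∈ C, c ∣ L → ∀ i ∈ I, ¬ (c:ℤ) ∣ m0 + i)
    (h2 : ∀ p : ℕ, p.Prime → p ≤ I.card →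
      ∀ i ∈ I, ∀ j ∈ I, i ≠ j → (p:ℤ) * (i - j) ∣ L) :
    0 < m {x | (L:ℤ) ∣ x - m0 ∧ ∀ i ∈ I, x + i ∉ MB C} := by
  set T : ℕ → Set ℕ := fun g => {t | g * t ∈ C ∧ t ≠ 1} with hT
  have hsmall : ∀ g, Small m (T g) := fun g =>
    h.small_of_lt_one (hC g (T g) (fun t ht => ht.1) (fun ht => ht.2 rfl))
  set N : ℝ := (I.card : ℝ) * L.divisors.card + 1 with hN
  have hN0 : 0 < N := by positivity
  obtain ⟨y, hyL, hy⟩ : ∃ y, L ≤ y ∧ ∀ g ∈ L.divisors, m (MB (rough (T g) y)) < 1 / N := by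
    have := (eventually_ge_atTop L).and ((Filter.eventually_all_finset L.divisors).2
      fun g _ => hsmall g (1 / N) (by positivity))
    exact this.exists
  set g : ℤ → ℤ := fun i => (Int.gcd (m0 + i) L : ℤ) with hg
  have hg0 : ∀ i, 0 < g i := fun i => by
    simp only [hg]
    exact_mod_cast Int.gcd_pos_of_ne_zero_right _ (by exact_mod_cast hL.ne')
  have hgu : ∀ i, g i ∣ m0 + i := fun i => Int.gcd_dvd_left _ _
  have hgv : ∀ i, g i ∣ L := fun i => Int.gcd_dvd_right _ _
  choose u hu using hgu
  choose v hv using hgv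
  have huv : ∀ i, IsCoprime (u i) (v i) := by
    intro i
    have hb := Int.gcd_eq_gcd_ab (m0 + i) L
    change g i = _ at hb
    refine ⟨Int.gcdA (m0 + i) L, Int.gcdB (m0 + i) L, ?_⟩
    apply mul_left_cancel₀ (hg0 i).ne'
    linear_combination (-Int.gcdA (m0 + i) L) * hu i - Int.gcdB (m0 + i) L * hv i - hb
  have hav : ∀ p : ℕ, ∃ k : ℕ, p.Prime → ∀ i ∈ I, ¬ (p:ℤ) ∣ u i + v i * k := by
    intro p
    by_cases hp : p.Prime
    · obtain ⟨k, hk⟩ := exists_avoid hL hp (h2 p hp) hu hv huv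
      exact ⟨k, fun _ => hk⟩
    · exact ⟨0, fun h => absurd h hp⟩
  choose k hk using hav
  obtain ⟨K, hK⟩ := exists_crt ((Finset.Icc 1 y).filter Nat.Prime)
    (fun p hp => (Finset.mem_filter.1 hp).2) k
  have hKp : ∀ p : ℕ, p.Prime → p ≤ y → ∀ i ∈ I, ¬ (p:ℤ) ∣ u i + v i * K := by
    intro p hp hpy i hi hd
    apply hk p hp i hi
    have h3 := (hK p (Finset.mem_filter.2 ⟨Finset.mem_Icc.2 ⟨hp.one_le, hpy⟩, hp⟩)).mul_left (v i)
    have h4 := dvd_sub hd h3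
    rwa [show u i + v i * K - v i * (K - k p) = u i + v i * k p by ring] at h4
  set x0 : ℤ := m0 + L * K with hx0
  set V := y.factorial with hV
  have hLV : 0 < L * V := Nat.mul_pos hL y.factorial_pos
  have hLV' : (0:ℝ) < (L * V : ℕ) := by exact_mod_cast hLV
  have hpLV : ∀ p, p.Prime → p ∣ L * V → p ≤ y := by
    intro p hp hd
    rcases (Nat.Prime.dvd_mul hp).1 hd with hd | hd
    · exact (Nat.le_of_dvd hL hd).trans hyL
    · exact (Nat.Prime.dvd_factorial hp).1 hd
  set E : Set ℤ := {x | (L:ℤ) ∣ x - m0 ∧ ∀ i ∈ I, x + i ∉ MB C} with hE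
  set bad : Set ℤ := ⋃ q ∈ I ×ˢ L.divisors,
    {x | x + q.1 ∈ MB (rough (T q.2) y) ∩ cls (x0 + q.1) (L * V)} with hbad
  have hsub : cls x0 (L * V) ⊆ E ∪ bad := by
    intro x hx
    by_cases hxE : x ∈ E
    · exact Or.inl hxE
    right
    obtain ⟨j, hj⟩ := hx
    have hLx : (L:ℤ) ∣ x - m0 := ⟨K + V * j, by
      rw [hx0] at hj; push_cast at hj; linear_combination hj⟩
    have : ∃ i ∈ I, x + i ∈ MB C := by
      by_contra hcon
      push Not at hcon
      exact hxE ⟨hLx, hcon⟩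
    obtain ⟨i, hi, c, hcC, hcx⟩ := this
    set z := u i + v i * (K + V * j) with hz
    have hxz : x + i = g i * z := by
      rw [hx0] at hj; push_cast at hj
      rw [hz]
      linear_combination hj + hu i + (K + V * j) * hv i
    have hzp : ∀ p : ℕ, p.Prime → p ≤ y → ¬ (p:ℤ) ∣ z := by
      intro p hp hpy hd
      apply hKp p hp hpy i hi
      have h3 : (p:ℤ) ∣ v i * (V * j) :=
        ((Int.natCast_dvd_natCast.2 ((Nat.Prime.dvd_factorial hp).2 hpy)).mul_right _).mul_left _
      have h4 := dvd_sub hd h3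
      rwa [show z - v i * (V * j) = u i + v i * K by rw [hz]; ring] at h4
    -- split `c` into its part in `g i` and a cofactor dividing `z`
    set G := Int.gcd (m0 + i) L with hG
    set d := Nat.gcd c G with hd
    have hG0 : 0 < G := by have := hg0 i; simp only [hg] at this; exact_mod_cast this
    have hd0 : 0 < d := Nat.gcd_pos_of_pos_right _ hG0
    obtain ⟨t, ht⟩ : d ∣ c := Nat.gcd_dvd_left c G
    have hGL : G ∣ L := by exact_mod_cast Int.gcd_dvd_right (m0 + i) L
    have hdL : d ∣ L := (Nat.gcd_dvd_right c G).trans hGL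
    have htz : t ∣ z.natAbs := by
      have h3 : c ∣ G * z.natAbs := by
        have := Int.natAbs_dvd_natAbs.2 hcx
        rw [hxz, Int.natAbs_mul] at this
        simpa [hg] using this
      obtain ⟨G', hG'⟩ : d ∣ G := Nat.gcd_dvd_right c G
      have h4 : d * t ∣ d * (G' * z.natAbs) := by rw [← ht, ← mul_assoc, ← hG']; exact h3
      have h5 := Nat.dvd_of_mul_dvd_mul_left hd0 h4
      have hcop : Nat.Coprime t G' := by
        have h6 : d = Nat.gcd (d * t) (d * G') := by rw [← ht, ← hG']
        rw [Nat.gcd_mul_left] at h6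
        exact Nat.eq_of_mul_eq_mul_left hd0 (by rw [mul_one]; exact h6.symm)
      exact hcop.dvd_of_dvd_mul_left h5
    have htZ : (t:ℤ) ∣ z := Int.natCast_dvd.2 htz
    have ht1 : t ≠ 1 := by
      rintro rfl
      rw [mul_one] at ht
      refine h1 c hcC (ht ▸ hdL) i hi ?_
      rw [ht, hu i]
      exact (Int.natCast_dvd_natCast.2 (Nat.gcd_dvd_right c G)).mul_right _
    rw [hbad]
    simp only [Set.mem_iUnion, Finset.mem_product, Nat.mem_divisors]
    refine ⟨(i, d), ⟨hi, hdL, hL.ne'⟩, ⟨t, ⟨⟨ht ▸ hcC, ht1⟩, ?_⟩, ?_⟩, ?_⟩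
    · intro p hp hpt
      by_contra hc
      exact hzp p hp (not_lt.1 hc) ((Int.natCast_dvd_natCast.2 hpt).trans htZ)
    · show (t:ℤ) ∣ x + i
      rw [hxz]; exact htZ.mul_left _
    · show ((L * V : ℕ):ℤ) ∣ x + i - (x0 + i)
      rw [add_sub_add_right_eq_sub]; exact ⟨j, hj⟩
  have hbadm : m bad < 1 / (L * V : ℕ) := by
    calc m bad ≤ ∑ q ∈ I ×ˢ L.divisors,
          m {x | x + q.1 ∈ MB (rough (T q.2) y) ∩ cls (x0 + q.1) (L * V)} := h.biUnion_le _ _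
      _ ≤ ∑ q ∈ I ×ˢ L.divisors, 1 / N / (L * V : ℕ) := by
          refine Finset.sum_le_sum fun q hq => ?_
          rw [h.shift_int, h.inter_cls_MB hLV fun t ht => rough_coprime ht hpLV]
          have := hy q.2 (Finset.mem_product.1 hq).2
          gcongr
      _ = (N - 1) / N / (L * V : ℕ) := by
          rw [Finset.sum_const, Finset.card_product, nsmul_eq_mul, hN]
          push_cast; ring
      _ < 1 / (L * V : ℕ) := by
          gcongr
          rw [div_lt_one hN0]; linarith
  have := (h.mono hsub).trans (h.union_le _ _)
  rw [h.cls_eq hLV] at this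
  linarith

end

/-! ### The tautification and its subshift -/

section
variable {m : Set ℤ → ℝ}

lemma MB_empty : MB ∅ = ∅ := by ext; simp [MB]

lemma behrend_one : Behrend {1} := by
  refine ⟨by simp, ?_⟩
  have : MB {1} = Set.univ := by ext; simp [MB]
  rw [this, logDensity_iff]
  exact logProp_univ

lemma subset_Cset (B : Set ℕ) : B ⊆ Cset B := fun b hb => ⟨{1}, behrend_one, by simpa using hb⟩

lemma IsLogMean.nonempty (h : IsLogMean m) {A : Set ℕ} (hA : m (MB A) = 1) : A.Nonempty := by
  rw [Set.nonempty_iff_ne_empty]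
  rintro rfl
  rw [MB_empty, h.empty] at hA
  exact zero_ne_one hA

lemma zero_notMem_Cset {B : Set ℕ} (hB : 0 ∉ B) : 0 ∉ Cset B := by
  rintro ⟨A, hA, hAB⟩
  obtain ⟨m, h⟩ := exists_isLogMean
  obtain ⟨a, ha⟩ := h.nonempty (h.eq_of_logDensity hA.2)
  exact hB (by simpa using hAB a ha)

lemma Bprime_subset (B : Set ℕ) : Bprime B ⊆ Cset B := fun _ hb =>
  hb.1.elim (fun h => subset_Cset B h) id

lemma exists_Bprime_dvd {B : Set ℕ} (hB : 0 ∉ B) {c : ℕ} (hc : c ∈ Cset B) :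
    ∃ b ∈ Bprime B, b ∣ c := by
  have hex : ∃ d, d ∈ Cset B ∧ d ∣ c := ⟨c, hc, dvd_rfl⟩
  obtain ⟨h1, h2⟩ := Nat.find_spec hex
  refine ⟨Nat.find hex, ⟨Or.inr h1, fun e he hed => ?_⟩, h2⟩
  have he : e ∈ Cset B := he.elim (fun h => subset_Cset B h) id
  have h3 := Nat.find_min' hex ⟨he, hed.trans h2⟩
  have h4 : Nat.find hex ≠ 0 := fun h0 => zero_notMem_Cset hB (h0 ▸ h1)
  exact le_antisymm (Nat.le_of_dvd (Nat.pos_of_ne_zero h4) hed) h3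

/-- The union of Behrend sets rescaled by the elements of a Behrend set is again Behrend, so an
element `g` with `g T ⊆ 𝓑'`, `T` Behrend, would already belong to `C`. -/
lemma IsLogMean.noBehrend_Bprime (h : IsLogMean m) {B : Set ℕ} (hB : 0 ∉ B) :
    NoBehrend m (Bprime B) := by
  intro g T hT h1
  by_contra hc
  have hT1 : m (MB T) = 1 := le_antisymm (h.le_one _) (not_lt.1 hc)
  have hne : ∀ t ∈ T, g * t ≠ 0 := fun t ht e =>
    zero_notMem_Cset hB (e ▸ Bprime_subset B (hT t ht))
  have hA : ∀ t : ℕ, ∃ A : Set ℕ, t ∈ T → Behrend A ∧ ∀ a ∈ A, g * t * a ∈ B := by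
    intro t
    by_cases ht : t ∈ T
    · obtain ⟨A, hA⟩ := Bprime_subset B (hT t ht)
      exact ⟨A, fun _ => hA⟩
    · exact ⟨∅, fun h => absurd h ht⟩
  choose A hA using hA
  set A' : Set ℕ := {n | ∃ t ∈ T, ∃ a ∈ A t, n = t * a} with hA'
  have hA1 : m (MB A') = 1 := by
    refine le_antisymm (h.le_one _) (le_of_forall_pos_le_add fun ε hε => ?_)
    obtain ⟨S, hS, -, hm⟩ := h.cont T ε hε
    set nul : ℕ → Set ℤ := fun s => {n | (s:ℤ) ∣ n ∧ ∀ a ∈ A s, ¬ ((s * a : ℕ):ℤ) ∣ n}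
    have hsub : MB S ⊆ MB A' ∪ ⋃ s ∈ S, nul s := by
      rintro n ⟨s, hs, hsn⟩
      by_cases hn : n ∈ MB A'
      · exact Or.inl hn
      · refine Or.inr (Set.mem_biUnion (x := s) hs ⟨hsn, fun a ha han => hn ?_⟩)
        exact ⟨s * a, ⟨s, hS hs, a, ha, rfl⟩, han⟩
    have hnul : m (⋃ s ∈ S, nul s) ≤ 0 := by
      refine (h.biUnion_le _ _).trans (Finset.sum_nonpos fun s hs => ?_)
      exact (h.null_dvd (h.eq_of_logDensity (hA s (hS hs)).1.2)
        (Nat.pos_of_ne_zero (right_ne_zero_of_mul (hne s (hS hs))))).le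
    have := (h.mono hsub).trans (h.union_le _ _)
    linarith
  have hg : g ∈ Cset B := by
    refine ⟨A', ⟨?_, hA1 ▸ h.logDensity A'⟩, ?_⟩
    · rintro _ ⟨t, ht, a, ha, rfl⟩
      exact Nat.mul_pos (Nat.pos_of_ne_zero (right_ne_zero_of_mul (hne t ht)))
        ((hA t ht).1.1 a ha)
    · rintro _ ⟨t, ht, a, ha, rfl⟩
      rw [← mul_assoc]; exact (hA t ht).2 a ha
  obtain ⟨b, hb, hbg⟩ := exists_Bprime_dvd hB hg
  obtain ⟨t, ht⟩ := h.nonempty hT1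
  have hbt : b = g * t := (hT t ht).2 b hb.1 (hbg.trans (dvd_mul_right _ _))
  have hg0 : 0 < g := Nat.pos_of_ne_zero (left_ne_zero_of_mul (hne t ht))
  have : t = 1 := by
    rw [hbt] at hbg
    exact Nat.dvd_one.1 (Nat.dvd_of_mul_dvd_mul_left hg0 (by rwa [mul_one]))
  exact h1 (this ▸ ht)

lemma IsLogMean.taut_Bprime (h : IsLogMean m) {B : Set ℕ} (hB : 0 ∉ B) : Taut (Bprime B) := by
  intro b hb
  refine ⟨_, _, h.logDensity _, h.logDensity _, ?_⟩
  have hb0 : 0 < b := Nat.pos_of_ne_zero fun e =>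
    zero_notMem_Cset hB (e ▸ Bprime_subset B hb)
  have hpos := h.pattern_pos ((h.noBehrend_Bprime hB).mono (Set.sdiff_subset (t := {b}))) {0} hb0 0
    (fun c hc hcb => absurd (hb.2 c hc.1.1 hcb) hc.2)
    (fun p hp hp1 => absurd (by simpa using hp1) (not_le.2 hp.one_lt))
  set E : Set ℤ := {x | (b:ℤ) ∣ x - 0 ∧ ∀ i ∈ ({0} : Finset ℤ), x + i ∉ MB (Bprime B \ {b})}
  have hd : Disjoint (MB (Bprime B \ {b})) E := by
    rw [Set.disjoint_left]
    rintro x hx ⟨_, hE⟩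
    exact hE 0 (by simp) (by simpa using hx)
  have hsub : MB (Bprime B \ {b}) ∪ E ⊆ MB (Bprime B) := by
    refine Set.union_subset (MB_mono Set.sdiff_subset) ?_
    rintro x ⟨hx, _⟩
    exact ⟨b, hb, by simpa using hx⟩
  have := h.mono hsub
  rw [h.union _ _ hd] at this
  linarith

lemma IsLogMean.null_Cset (h : IsLogMean m) {B : Set ℕ} (hB : 0 ∉ B) {c : ℕ} (hc : c ∈ Cset B) :
    m {n | (c:ℤ) ∣ n ∧ n ∉ MB B} = 0 := by
  obtain ⟨A, hA, hAB⟩ := id hc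
  have hc0 : 0 < c := Nat.pos_of_ne_zero fun e => zero_notMem_Cset hB (e ▸ hc)
  refine le_antisymm (le_of_le_of_eq (h.mono ?_)
    (h.null_dvd (h.eq_of_logDensity hA.2) hc0)) (h.nonneg _)
  rintro n ⟨hn, hnB⟩
  exact ⟨hn, fun a ha han => hnB ⟨c * a, hAB a ha, han⟩⟩

end

lemma mem_Xeta {B : Set ℕ} {y : ℤ → Bool} :
    y ∈ Xeta B ↔ ∀ n : ℕ, ∃ x : ℤ, ∀ i : ℤ, |i| ≤ n → eta B (i + x) = y i := by
  constructor
  · intro hy n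
    have hopen : IsOpen (⋂ i ∈ Finset.Icc (-(n:ℤ)) n, {z : ℤ → Bool | z i = y i}) :=
      isOpen_biInter_finset fun i _ =>
        (isOpen_discrete ({y i} : Set Bool)).preimage (continuous_apply (A := fun _ : ℤ => Bool) i)
    obtain ⟨z, hz, x, rfl⟩ := mem_closure_iff.1 hy _ hopen (by simp)
    refine ⟨x, fun i hi => ?_⟩
    simp only [Set.mem_iInter] at hz
    exact hz i (Finset.mem_Icc.2 (abs_le.1 hi))
  · intro hy
    choose x hx using hy
    refine mem_closure_of_tendsto (f := fun n i => eta B (i + x n)) (b := atTop)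
      (tendsto_pi_nhds.2 fun i => ?_) (Eventually.of_forall fun n => ⟨x n, rfl⟩)
    refine tendsto_const_nhds.congr' ?_
    filter_upwards [eventually_ge_atTop i.natAbs] with n hn
    exact (hx n i (abs_le.2 ⟨by omega, by omega⟩)).symm

lemma eta_eq_iff {B C : Set ℕ} {a b : ℤ} : eta B a = eta C b ↔ (a ∈ MB B ↔ b ∈ MB C) := by
  by_cases ha : a ∈ MB B <;> by_cases hb : b ∈ MB C <;> simp [eta, FB, ha, hb]

/-- `X_{η_C} ⊆ X_{η_B}` means that every central block of `η_C` occurs in `η_B`. -/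
lemma Xeta_subset_iff {B C : Set ℕ} : Xeta C ⊆ Xeta B ↔
    ∀ n : ℕ, ∃ x : ℤ, ∀ i : ℤ, |i| ≤ n → (i + x ∈ MB B ↔ i ∈ MB C) := by
  constructor
  · intro h n
    have h1 : eta C ∈ Xeta C := mem_Xeta.2 fun n => ⟨0, fun i _ => by rw [add_zero]⟩
    obtain ⟨x, hx⟩ := mem_Xeta.1 (h h1) n
    exact ⟨x, fun i hi => eta_eq_iff.1 (hx i hi)⟩
  · intro h y hy
    rw [mem_Xeta] at hy ⊢
    intro n
    obtain ⟨x, hx⟩ := hy n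
    obtain ⟨x', hx'⟩ := h (n + x.natAbs)
    refine ⟨x + x', fun i hi => ?_⟩
    rw [← hx i hi, ← add_assoc]
    refine eta_eq_iff.2 (hx' _ ?_)
    refine (abs_add_le _ _).trans ?_
    push_cast
    linarith

lemma dvd_factorial_of_abs_le {n : ℕ} {a : ℤ} (h0 : a ≠ 0) (h : |a| ≤ n) :
    a ∣ (n.factorial : ℤ) := by
  rw [← Int.natAbs_dvd, Int.natCast_dvd_natCast]
  exact Nat.dvd_factorial (Int.natAbs_pos.2 h0)
    (by have := abs_le.1 h; omega)

lemma window_dvd {n L : ℕ} {I : Finset ℤ} (hI : I ⊆ Finset.Icc (-(n:ℤ)) n)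
    (hL : (2 * n + 1).factorial ^ 2 ∣ L) (p : ℕ) (hp : p.Prime) (hpI : p ≤ I.card) :
    ∀ i ∈ I, ∀ j ∈ I, i ≠ j → (p:ℤ) * (i - j) ∣ L := by
  intro i hi j hj hij
  have h1 : p ≤ 2 * n + 1 := by
    have := hpI.trans (Finset.card_le_card hI)
    rw [Int.card_Icc] at this
    omega
  have hi' := Finset.mem_Icc.1 (hI hi)
  have hj' := Finset.mem_Icc.1 (hI hj)
  have h2 : (i - j) ∣ ((2 * n + 1).factorial : ℤ) :=
    dvd_factorial_of_abs_le (sub_ne_zero.2 hij) (by rw [abs_le]; push_cast; constructor <;> linarith)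
  have h3 : (p:ℤ) ∣ ((2 * n + 1).factorial : ℤ) :=
    Int.natCast_dvd_natCast.2 ((Nat.Prime.dvd_factorial hp).2 h1)
  refine (mul_dvd_mul h3 h2).trans ?_
  rw [← sq]
  exact_mod_cast hL

/-- Every block of `η'` occurs in `η`: the multiples of `b' ∈ 𝓑'` are almost all in `M_𝓑`, and
the `x` realizing a given block up to this null set have positive density. -/
lemma Xeta_Bprime_subset {B : Set ℕ} (hB : 0 ∉ B) : Xeta (Bprime B) ⊆ Xeta B := by
  obtain ⟨m, h⟩ := exists_isLogMean
  rw [Xeta_subset_iff]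
  intro n
  set W := Finset.Icc (-(n:ℤ)) n with hW
  set I := W.filter fun i => i ∉ MB (Bprime B)
  set J := W.filter fun i => i ∈ MB (Bprime B) with hJ
  have hb : ∀ j : ℤ, ∃ b : ℕ, j ∈ MB (Bprime B) → b ∈ Bprime B ∧ (b:ℤ) ∣ j := by
    intro j
    by_cases hj : j ∈ MB (Bprime B)
    · obtain ⟨b, hb⟩ := hj
      exact ⟨b, fun _ => hb⟩
    · exact ⟨0, fun h => absurd h hj⟩
  choose b hb using hb
  set L := (2 * n + 1).factorial ^ 2 * ∏ j ∈ J, b j with hL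
  have hJb : ∀ j ∈ J, b j ∈ Bprime B ∧ (b j:ℤ) ∣ j := fun j hj => hb j (Finset.mem_filter.1 hj).2
  have hL0 : 0 < L := by
    refine Nat.mul_pos (pow_pos (Nat.factorial_pos _) _) (Finset.prod_pos fun j hj => ?_)
    exact Nat.pos_of_ne_zero fun e =>
      zero_notMem_Cset hB (e ▸ Bprime_subset B (hJb j hj).1)
  have hpos := h.pattern_pos (h.noBehrend_Bprime hB) I hL0 0
    (fun c hc _ i hi hd => (Finset.mem_filter.1 hi).2 ⟨c, hc, by simpa using hd⟩)
    (window_dvd (Finset.filter_subset _ _) (Dvd.intro _ rfl))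
  set E : Set ℤ := {x | (L:ℤ) ∣ x - 0 ∧ ∀ i ∈ I, x + i ∉ MB (Bprime B)} with hE
  set nul : ℤ → Set ℤ := fun j => {x | x + j ∈ {n : ℤ | (b j : ℤ) ∣ n ∧ n ∉ MB B}}
  have hnul : m (⋃ j ∈ J, nul j) ≤ 0 := by
    refine (h.biUnion_le _ _).trans (Finset.sum_nonpos fun j hj => ?_)
    rw [h.shift_int, h.null_Cset hB (Bprime_subset B (hJb j hj).1)]
  obtain ⟨x, hx, hxn⟩ : ∃ x ∈ E, x ∉ ⋃ j ∈ J, nul j := by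
    by_contra hc
    push Not at hc
    linarith [h.mono (show E ⊆ _ from hc)]
  refine ⟨x, fun i hi => ?_⟩
  have hiW : i ∈ W := Finset.mem_Icc.2 (abs_le.1 hi)
  rw [add_comm i x]
  by_cases hiB : i ∈ MB (Bprime B)
  · refine iff_of_true ?_ hiB
    have hiJ : i ∈ J := Finset.mem_filter.2 ⟨hiW, hiB⟩
    by_contra hc
    refine hxn (Set.mem_biUnion (x := i) hiJ ⟨?_, hc⟩)
    refine dvd_add ?_ (hJb i hiJ).2
    have h1 : b i ∣ L := (Finset.dvd_prod_of_mem b hiJ).mul_left _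
    exact (Int.natCast_dvd_natCast.2 h1).trans (by simpa using hx.1)
  · refine iff_of_false ?_ hiB
    rintro ⟨c, hc, hcx⟩
    obtain ⟨b', hb', hbc⟩ := exists_Bprime_dvd hB (subset_Cset B hc)
    exact hx.2 i (Finset.mem_filter.2 ⟨hiW, hiB⟩)
      ⟨b', hb', (Int.natCast_dvd_natCast.2 hbc).trans hcx⟩

/-! ### Maximality -/

lemma gcd_prod_dvd_pow {ι : Type*} (k F : ℕ) (J : Finset ι) (f : ι → ℕ)
    (hF : ∀ j ∈ J, Nat.gcd k (f j) ∣ F) : Nat.gcd k (∏ j ∈ J, f j) ∣ F ^ J.card := by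
  induction J using Finset.induction_on with
  | empty => simp
  | insert a J ha ih =>
    rw [Finset.prod_insert ha, Finset.card_insert_of_notMem ha, pow_succ']
    exact (Nat.gcd_mul_right_dvd_mul_gcd _ _ _).trans (mul_dvd_mul (hF a (Finset.mem_insert_self _ _))
      (ih fun j hj => hF j (Finset.mem_insert_of_mem hj)))

lemma exists_residue (V : Ultrafilter ℕ) (M : ℕ → ℤ) {b : ℕ} (hb : 0 < b) :
    ∃ r : ℤ, ∀ᶠ N in (V : Filter ℕ), (b:ℤ) ∣ M N - r := by
  have hmem : Set.Icc (0:ℤ) b ∈ V.map (fun N => M N % b) := by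
    refine Filter.Eventually.of_forall (f := (V : Filter ℕ)) fun N => ?_
    exact ⟨Int.emod_nonneg _ (by omega), (Int.emod_lt_of_pos _ (by omega)).le⟩
  obtain ⟨r, -, hr⟩ := Ultrafilter.eq_pure_of_finite_mem (Set.finite_Icc _ _) hmem
  refine ⟨r, ?_⟩
  have h1 : {r} ∈ V.map (fun N => M N % b) := by rw [hr]; exact rfl
  filter_upwards [show ∀ᶠ N in (V : Filter ℕ), M N % b = r from h1] with N hN
  rw [← hN]
  exact Int.dvd_self_sub_emod

section
variable {m : Set ℤ → ℝ} {B C : Set ℕ} {M : ℕ → ℤ} {V : Ultrafilter ℕ}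

/-- If longer and longer central blocks of `η_C` occur in `η_B` at the positions `M N`, then every
`b ∈ B` is a multiple of some `c ∈ C` dividing `M N` for almost all `N`. -/
lemma IsLogMean.exists_dvd_of_mem (h : IsLogMean m) (hB : 0 ∉ B) (hC : NoBehrend m C)
    (hM : ∀ N : ℕ, ∀ i : ℤ, |i| ≤ N → (i + M N ∈ MB B ↔ i ∈ MB C))
    (hV : (V : Filter ℕ) ≤ atTop) {b : ℕ} (hb : b ∈ B) :
    ∃ c ∈ C, c ∣ b ∧ ∀ᶠ N in (V : Filter ℕ), (c:ℤ) ∣ M N := by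
  have hb0 : 0 < b := Nat.pos_of_ne_zero fun e => hB (e ▸ hb)
  obtain ⟨r, hr⟩ := exists_residue V M hb0
  by_contra hcon
  have hcon : ∀ c ∈ C, c ∣ b → ¬ ∀ᶠ N in (V : Filter ℕ), (c:ℤ) ∣ M N :=
    fun c hc hcb hcV => hcon ⟨c, hc, hcb, hcV⟩
  have hpos := h.pattern_pos hC {0} hb0 (-r) (fun c hc hcb i hi hd => by
      rw [Finset.mem_singleton.1 hi, add_zero, dvd_neg] at hd
      refine hcon c hc hcb ?_
      filter_upwards [hr] with N hN
      exact (dvd_iff_dvd_of_dvd_sub ((Int.natCast_dvd_natCast.2 hcb).trans hN)).2 hd)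
    (fun p hp hp1 => absurd (by simpa using hp1) (not_le.2 hp.one_lt))
  obtain ⟨x, hx1, hx2⟩ : ({x | (b:ℤ) ∣ x - -r ∧ ∀ i ∈ ({0} : Finset ℤ), x + i ∉ MB C}).Nonempty := by
    rw [Set.nonempty_iff_ne_empty]
    intro he
    rw [he, h.empty] at hpos
    exact lt_irrefl _ hpos
  obtain ⟨N, hN, hxN⟩ := (hr.and (hV (eventually_ge_atTop x.natAbs))).exists
  refine hx2 0 (by simp) ?_
  rw [add_zero, ← hM N x (abs_le.2 ⟨by omega, by omega⟩)]
  refine ⟨b, hb, ?_⟩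
  have := dvd_add hx1 hN
  rwa [show x - -r + (M N - r) = x + M N by ring] at this

/-- The conclusion of `exists_dvd_of_mem` persists for `c'` with `c' A ⊆ B`, `A` Behrend. -/
lemma IsLogMean.exists_dvd_of_mem_Cset (h : IsLogMean m) (hB : 0 ∉ B) (hC : NoBehrend m C)
    (hM : ∀ N : ℕ, ∀ i : ℤ, |i| ≤ N → (i + M N ∈ MB B ↔ i ∈ MB C))
    (hV : (V : Filter ℕ) ≤ atTop) {b : ℕ} (hb : b ∈ Cset B) :
    ∃ c ∈ C, c ∣ b ∧ ∀ᶠ N in (V : Filter ℕ), (c:ℤ) ∣ M N := by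
  have hb0 : 0 < b := Nat.pos_of_ne_zero fun e => zero_notMem_Cset hB (e ▸ hb)
  by_contra hcon
  have hcon : ∀ c ∈ C, c ∣ b → ¬ ∀ᶠ N in (V : Filter ℕ), (c:ℤ) ∣ M N :=
    fun c hc hcb hcV => hcon ⟨c, hc, hcb, hcV⟩
  set Z : Set ℕ := {c ∈ C | ∀ᶠ N in (V : Filter ℕ), (c:ℤ) ∣ M N} with hZ
  have hpos := h.pattern_pos (hC.mono (show Z ⊆ C from fun c hc => hc.1)) {0} hb0 0
    (fun c hc hcb => absurd hc.2 (hcon c hc.1 hcb))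
    (fun p hp hp1 => absurd (by simpa using hp1) (not_le.2 hp.one_lt))
  refine hpos.ne' (le_antisymm (le_of_le_of_eq (h.mono ?_) (h.null_Cset hB hb)) (h.nonneg _))
  rintro x ⟨hx1, hx2⟩
  refine ⟨by simpa using hx1, ?_⟩
  rintro ⟨b', hb', hbx⟩
  obtain ⟨c, hc, hcb, hcV⟩ := h.exists_dvd_of_mem hB hC hM hV hb'
  refine hx2 0 (by simp) ⟨c, ⟨hc, hcV⟩, ?_⟩
  rw [add_zero]
  exact (Int.natCast_dvd_natCast.2 hcb).trans hbx

end

/-- Maximality of `𝓑'`. A block of `η_C` occurs in `η` near suitable `M N`; at such a place no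
element of `𝓑'` obstructs the ones of the block, so that the block occurs in `η'` too. -/
lemma Xeta_subset_Bprime {B C : Set ℕ} (hB : 0 ∉ B) (h0 : 0 ∉ C) (hCt : Taut C)
    (hsub : Xeta C ⊆ Xeta B) : Xeta C ⊆ Xeta (Bprime B) := by
  obtain ⟨m, h⟩ := exists_isLogMean
  have hC := h.noBehrend_of_taut h0 hCt
  rw [Xeta_subset_iff] at hsub ⊢
  choose M hM using hsub
  set V := hyperfilter ℕ
  have hV : (V : Filter ℕ) ≤ atTop := Nat.hyperfilter_le_atTop
  have hfree : ∀ b ∈ Bprime B, ∀ i ∉ MB C, ∀ᶠ N in (V : Filter ℕ), ¬ (b:ℤ) ∣ M N + i := by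
    intro b hb i hi
    obtain ⟨c, hc, hcb, hcV⟩ := h.exists_dvd_of_mem_Cset hB hC hM hV (Bprime_subset B hb)
    filter_upwards [hcV] with N hN hd
    exact hi ⟨c, hc, (dvd_add_right hN).1 ((Int.natCast_dvd_natCast.2 hcb).trans hd)⟩
  intro n
  set W := Finset.Icc (-(n:ℤ)) n with hW
  set I := W.filter fun i => i ∉ MB C
  set J := W.filter fun i => i ∈ MB C with hJ
  set F := (2 * n + 1).factorial with hF
  have hF0 : 0 < F := Nat.factorial_pos _
  obtain ⟨N, hnN, hN⟩ : ∃ N, n ≤ N ∧ ∀ b ∈ ((F ^ 2 * F ^ J.card).divisors.filter (· ∈ Bprime B)),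
      ∀ i ∈ I, ¬ (b:ℤ) ∣ M N + i := by
    refine (Filter.Eventually.and (f := (V : Filter ℕ)) (hV (eventually_ge_atTop n)) ((Filter.eventually_all_finset _).2 fun b hb =>
      (Filter.eventually_all_finset _).2 fun i hi => ?_)).exists
    exact hfree b (Finset.mem_filter.1 hb).2 i (Finset.mem_filter.1 hi).2
  have hb : ∀ j : ℤ, ∃ b : ℕ, j ∈ J → b ∈ B ∧ (b:ℤ) ∣ j + M N := by
    intro j
    by_cases hj : j ∈ J
    · have hj' := Finset.mem_filter.1 hj
      have hjW := Finset.mem_Icc.1 hj'.1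
      obtain ⟨b, hb⟩ := (hM N j (abs_le.2 ⟨by omega, by omega⟩)).2 hj'.2
      exact ⟨b, fun _ => hb⟩
    · exact ⟨0, fun h => absurd h hj⟩
  choose b hb using hb
  set L := F ^ 2 * ∏ j ∈ J, b j with hL
  have hL0 : 0 < L := by
    refine Nat.mul_pos (pow_pos hF0 _) (Finset.prod_pos fun j hj => ?_)
    exact Nat.pos_of_ne_zero fun e => hB (e ▸ (hb j hj).1)
  have hpos := h.pattern_pos (h.noBehrend_Bprime hB) I hL0 (M N) (fun c hc hcL i hi hd => by
      refine hN c (Finset.mem_filter.2 ⟨Nat.mem_divisors.2 ⟨?_, by positivity⟩, hc⟩) i hi hd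
      -- `c` and `b j` divide `M N + i` and `M N + j`, so their gcd divides `i - j`
      have hgcd : ∀ j ∈ J, Nat.gcd c (b j) ∣ F := by
        intro j hj
        have hi' := Finset.mem_filter.1 hi
        have hj' := Finset.mem_filter.1 hj
        have hiW := Finset.mem_Icc.1 hi'.1
        have hjW := Finset.mem_Icc.1 hj'.1
        have hij : i - j ≠ 0 := sub_ne_zero.2 fun e => hi'.2 (e ▸ hj'.2)
        have h1 : ((Nat.gcd c (b j) : ℕ):ℤ) ∣ i - j := by
          have h2 := (Int.natCast_dvd_natCast.2 (Nat.gcd_dvd_left c (b j))).trans hd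
          have h3 := (Int.natCast_dvd_natCast.2 (Nat.gcd_dvd_right c (b j))).trans (hb j hj).2
          have := dvd_sub h2 h3
          rwa [show M N + i - (j + M N) = i - j by ring] at this
        exact Int.natCast_dvd_natCast.1 (h1.trans (dvd_factorial_of_abs_le hij
          (by rw [abs_le]; push_cast; constructor <;> linarith)))
      have h4 := Nat.gcd_mul_right_dvd_mul_gcd c (F ^ 2) (∏ j ∈ J, b j)
      rw [Nat.gcd_eq_left hcL] at h4
      exact h4.trans (mul_dvd_mul (Nat.gcd_dvd_right _ _) (gcd_prod_dvd_pow c F J b hgcd)))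
    (window_dvd (Finset.filter_subset _ _) (Dvd.intro _ rfl))
  obtain ⟨x, hx1, hx2⟩ : ({x | (L:ℤ) ∣ x - M N ∧ ∀ i ∈ I, x + i ∉ MB (Bprime B)}).Nonempty := by
    rw [Set.nonempty_iff_ne_empty]
    intro he
    rw [he, h.empty] at hpos
    exact lt_irrefl _ hpos
  refine ⟨x, fun i hi => ?_⟩
  have hiW : i ∈ W := Finset.mem_Icc.2 (abs_le.1 hi)
  by_cases hiC : i ∈ MB C
  · refine iff_of_true ?_ hiC
    have hiJ : i ∈ J := Finset.mem_filter.2 ⟨hiW, hiC⟩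
    obtain ⟨b', hb', hbb⟩ := exists_Bprime_dvd hB (subset_Cset B (hb i hiJ).1)
    refine ⟨b', hb', (Int.natCast_dvd_natCast.2 hbb).trans ?_⟩
    have h1 : b i ∣ L := (Finset.dvd_prod_of_mem b hiJ).mul_left _
    have h2 := dvd_add ((Int.natCast_dvd_natCast.2 h1).trans hx1) (hb i hiJ).2
    rwa [show x - M N + (i + M N) = i + x by ring] at h2
  · refine iff_of_false ?_ hiC
    rw [add_comm]
    exact hx2 i (Finset.mem_filter.2 ⟨hiW, hiC⟩)

/-- `𝓑'` is the largest element of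
`Taut(𝓑) = {𝓒 taut : X_{η_𝓒} ⊆ X_η}` for the order `𝓒₁ ≺ 𝓒₂ ⟺ X_{η_{𝓒₁}} ⊆ X_{η_{𝓒₂}}`. -/
theorem statement4 (B : Set ℕ) (hB : 0 ∉ B) :
    (Taut (Bprime B) ∧ Xeta (Bprime B) ⊆ Xeta B) ∧
    ∀ C : Set ℕ, 0 ∉ C → Taut C → Xeta C ⊆ Xeta B → Xeta C ⊆ Xeta (Bprime B) := by
  obtain ⟨m, h⟩ := exists_isLogMean
  exact ⟨⟨h.taut_Bprime hB, Xeta_Bprime_subset hB⟩,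
    fun C h0 hC hsub => Xeta_subset_Bprime hB h0 hC hsub⟩

end BFree
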